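/- Let d ≥ 3 be a fixed integer and set α = min{1/4, (d−2)/(2d)}. For every ε > 0 there exist constants c > 0 and N such that for all n ≥ N and all primes p with gcd(p,d) = 1 and p ≤ c·n^α, one has | (1/(nd)!) · Σ_{v ∈ F_p^n, v ≠ 0} #{permutations P of [n]×[d] : A(P)·v = 0 over F_p} − 1 | ≤ ε, where A(P) is reduced modulo p. -/

import Mathlib

open Finset

/-- Adjacency matrix of the directed configuration model: `A(P) k ℓ` is the number
of `i ∈ [d]` with `P (k, i) ∈ {ℓ} × [d]`. -/
def adjMat (n d : ℕ) (P : Equiv.Perm (Fin n × Fin d)) : Matrix (Fin n) (Fin n) ℤ :=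
  fun k l => ((Finset.univ.filter (fun i : Fin d => (P (k, i)).1 = l)).card : ℤ)

/-!
Expanding the indicator of `A(P) v = 0` in additive characters writes the probability that `v` is a
null vector as the average over `w` of the character expectations `charExp ψ d v w`, which are
symmetric in `v` and `w`. Let `B` be the set of vectors close to a constant one; the term `v = 0`
contributes the main term `1`. By the symmetry, the sum over `v ∉ B`, `w ∈ B` is the one over
`v ∈ B`, `w ∉ B`, hence equal to a sum of null probabilities over `B` up to the sum over `B × B`.
What remains to be bounded is the expected number of null vectors in `B \ {0}` (a union bound over
supports), the quantity `#B ^ 2 / p ^ n`, and the average of `‖charExp ψ d v w‖` over `v, w ∉ B`.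

Summing over permutations with prescribed letter counts and applying Cauchy-Schwarz bounds
`‖charExp ψ d v w‖` by a product of word probabilities, whose sum over all words is polynomial in
`n` for each letter, times a factor that decays exponentially in the dispersion of `(v, w)`, the
total deviation of `ψ` from `1` on products of differences of entries. Off few exceptional pairs the
dispersion of vectors outside `B` is large enough for the decay to win as long as `p` is at most a
small multiple of `n ^ (1 / 3) / log n`, and `1 / 4 < 1 / 3`.
-/

open scoped Nat

namespace DirectedConfiguration

section Words

variable {X α : Type*} [Fintype X] [DecidableEq α]

/-- The number of occurrences of the letter `a` in the word `u`. -/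
def letterCount (u : X → α) (a : α) : ℕ := #{x | u x = a}

@[to_additive]
lemma prod_comp_eq_prod_pow_letterCount {M : Type*} [CommMonoid M] [Fintype α] (u : X → α)
    (g : α → M) : ∏ x, g (u x) = ∏ a, g a ^ letterCount u a := by
  simp only [← Finset.prod_fiberwise' univ u g, prod_const, letterCount]

lemma sum_letterCount [Fintype α] (u : X → α) : ∑ a, letterCount u a = Fintype.card X := by
  simpa using (sum_comp_eq_sum_nsmul_letterCount u fun _ ↦ (1 : ℕ)).symm

lemma letterCount_le_card (u : X → α) (a : α) : letterCount u a ≤ Fintype.card X :=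
  card_le_univ _

lemma letterCount_comp_perm (u : X → α) (P : Equiv.Perm X) :
    letterCount (u ∘ P) = letterCount u := by
  funext a
  exact card_equiv P fun x ↦ by simp

lemma exists_perm_comp_eq {u w : X → α} (h : letterCount w = letterCount u) :
    ∃ P : Equiv.Perm X, u ∘ P = w := by
  have fiberEquiv (a : α) : Nonempty ({x // w x = a} ≃ {x // u x = a}) :=
    ⟨Fintype.equivOfCardEq (by simpa [letterCount, Fintype.card_subtype] using congrFun h a)⟩
  exact ⟨Equiv.ofFiberEquiv fun a ↦ (fiberEquiv a).some,
    funext fun x ↦ Equiv.ofFiberEquiv_map _ x⟩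

variable [DecidableEq X] [Fintype α]

lemma card_perm_comp_eq (u w : X → α) :
    #{P : Equiv.Perm X | u ∘ P = w} =
      if letterCount w = letterCount u then ∏ a, (letterCount u a)! else 0 := by
  split_ifs with h
  · obtain ⟨P₀, rfl⟩ := exists_perm_comp_eq h
    have translate : #{P : Equiv.Perm X | u ∘ P = u ∘ P₀} = #{P : Equiv.Perm X | u ∘ P = u} := by
      refine card_equiv (Equiv.mulRight P₀⁻¹) fun P ↦ ?_
      simp only [mem_filter_univ, Equiv.coe_mulRight, Equiv.Perm.coe_mul, ← Function.comp_assoc]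
      exact (Equiv.comp_symm_eq P₀ u (u ∘ P)).symm
    rw [translate, ← Fintype.card_subtype, DomMulAct.stabilizer_card]
    simp only [letterCount, Fintype.card_subtype]
  · refine card_eq_zero.2 (filter_eq_empty_iff.2 fun P _ hP ↦ h ?_)
    rw [← hP, letterCount_comp_perm]

lemma sum_perm_comp {M : Type*} [AddCommMonoid M] (u : X → α) (F : (X → α) → M) :
    ∑ P : Equiv.Perm X, F (u ∘ P) =
      (∏ a, (letterCount u a)!) • ∑ w with letterCount w = letterCount u, F w := by
  rw [← Finset.sum_fiberwise' univ (fun P : Equiv.Perm X ↦ u ∘ P) F, smul_sum, sum_filter]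
  simp only [sum_const, card_perm_comp_eq, ite_smul, zero_smul]

end Words

section GeneratingFunction

variable {X α : Type*} [Fintype X] [Fintype α] [DecidableEq α]

lemma sum_prod_stdAddChar_eq_ite {M : ℕ} [NeZero M] (hM : Fintype.card X < M) (u w : X → α) :
    ∑ t : α → ZMod M, (∏ x, ZMod.stdAddChar (-t (u x))) * ∏ x, ZMod.stdAddChar (t (w x)) =
      if letterCount w = letterCount u then (M : ℂ) ^ Fintype.card α else 0 := by
  have factorize (t : α → ZMod M) :
      (∏ x, ZMod.stdAddChar (-t (u x))) * ∏ x, ZMod.stdAddChar (t (w x)) =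
        ∏ a, ZMod.stdAddChar (t a * ((letterCount w a : ZMod M) - (letterCount u a : ZMod M))) := by
    rw [prod_comp_eq_prod_pow_letterCount w fun a ↦ ZMod.stdAddChar (t a),
      prod_comp_eq_prod_pow_letterCount u fun a ↦ ZMod.stdAddChar (-t a), ← prod_mul_distrib]
    refine prod_congr rfl fun a _ ↦ ?_
    rw [← AddChar.map_nsmul_eq_pow, ← AddChar.map_nsmul_eq_pow, ← AddChar.map_add_eq_mul,
      nsmul_eq_mul, nsmul_eq_mul]
    ring_nf
  have eq_iff (a : α) : ((letterCount w a : ZMod M) - letterCount u a = 0) ↔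
      letterCount w a = letterCount u a := by
    rw [sub_eq_zero, ZMod.natCast_eq_natCast_iff]
    exact ⟨fun h ↦ h.eq_of_lt_of_lt ((letterCount_le_card w a).trans_lt hM)
      ((letterCount_le_card u a).trans_lt hM), fun h ↦ h ▸ rfl⟩
  simp only [factorize]
  rw [← Fintype.prod_sum fun a (s : ZMod M) ↦
    ZMod.stdAddChar (s * ((letterCount w a : ZMod M) - (letterCount u a : ZMod M)))]
  simp only [AddChar.sum_mulShift _ (ZMod.isPrimitive_stdAddChar M), eq_iff, ZMod.card]
  split_ifs with h
  · simp [h]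
  · obtain ⟨a, ha⟩ := Function.ne_iff.1 h
    exact prod_eq_zero (mem_univ a) (by simp [ha])

variable [DecidableEq X]

lemma norm_sum_prod_le_of_letterCount_eq (u : X → α) (f : X → α → ℂ) {K : ℝ}
    (hK : ∀ z : α → ℂ, (∀ a, ‖z a‖ = 1) → ∏ x, ‖∑ a, z a * f x a‖ ≤ K) :
    ‖∑ w with letterCount w = letterCount u, ∏ x, f x (w x)‖ ≤ K := by
  set M := Fintype.card X + 1
  set e : AddChar (ZMod M) ℂ := ZMod.stdAddChar
  have hM : 0 < (M : ℝ) ^ Fintype.card α := by positivity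
  have extraction : ∑ t : α → ZMod M, (∏ x, e (-t (u x))) * ∏ x, ∑ a, e (t a) * f x a =
      (M : ℂ) ^ Fintype.card α *
        ∑ w with letterCount w = letterCount u, ∏ x, f x (w x) := by
    simp only [Fintype.prod_sum, mul_sum, prod_mul_distrib, ← mul_assoc]
    rw [sum_comm, sum_filter]
    refine sum_congr rfl fun w _ ↦ ?_
    rw [← sum_mul, sum_prod_stdAddChar_eq_ite (Nat.lt_succ_self _), ite_mul, zero_mul]
  refine le_of_mul_le_mul_left ?_ hM
  calc (M : ℝ) ^ Fintype.card α * ‖∑ w with letterCount w = letterCount u, ∏ x, f x (w x)‖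
      = ‖∑ t : α → ZMod M, (∏ x, e (-t (u x))) * ∏ x, ∑ a, e (t a) * f x a‖ := by
        rw [extraction, norm_mul, norm_pow, Complex.norm_natCast]
    _ ≤ ∑ _t : α → ZMod M, K := by
        refine norm_sum_le_of_le _ fun t _ ↦ ?_
        simpa [e, norm_prod, AddChar.norm_apply] using
          hK (fun a ↦ e (t a)) fun a ↦ AddChar.norm_apply _ _
    _ = (M : ℝ) ^ Fintype.card α * K := by simp [ZMod.card]

/- Weighting the letter `a` by `r a` multiplies every summand by the same factor `∏ x, r (u x)`,
since the words `u ∘ P` all have the same letters. -/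
lemma norm_sum_perm_prod_le (u : X → α) (f : X → α → ℂ) (r : α → ℝ)
    (hr : ∀ x, 0 < r (u x)) {K : ℝ}
    (hK : ∀ z : α → ℂ, (∀ a, ‖z a‖ = 1) → ∏ x, ‖∑ a, z a * (r a * f x a)‖ ≤ K) :
    ‖∑ P : Equiv.Perm X, ∏ x, f x (u (P x))‖ ≤
      (∏ a, (letterCount u a)! : ℕ) * (∏ x, r (u x))⁻¹ * K := by
  have hru : 0 < ∏ x, r (u x) := prod_pos fun x _ ↦ hr x
  have weighted : (∏ x, (r (u x) : ℂ)) * ∑ P : Equiv.Perm X, ∏ x, f x (u (P x)) =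
      (∏ a, (letterCount u a)! : ℕ) * ∑ w with letterCount w = letterCount u,
        ∏ x, (r (w x) * f x (w x) : ℂ) := by
    rw [← nsmul_eq_mul, ← sum_perm_comp u fun w ↦ ∏ x, (r (w x) * f x (w x) : ℂ), mul_sum]
    refine sum_congr rfl fun P _ ↦ ?_
    simp only [prod_mul_distrib, Function.comp_apply]
    rw [Equiv.prod_comp P fun x ↦ (r (u x) : ℂ)]
  have norm_weighted := congrArg norm weighted
  rw [norm_mul, norm_mul, norm_prod, Complex.norm_natCast] at norm_weighted
  simp only [Complex.norm_real, Real.norm_of_nonneg (hr _).le] at norm_weighted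
  rw [mul_right_comm, ← div_eq_mul_inv, le_div_iff₀' hru, norm_weighted]
  exact mul_le_mul_of_nonneg_left (norm_sum_prod_le_of_letterCount_eq u _ hK) (Nat.cast_nonneg _)

end GeneratingFunction

section NullVectors

variable {R : Type*} [CommRing R] {n d : ℕ}

lemma mulVec_adjMat_apply (P : Equiv.Perm (Fin n × Fin d)) (v : Fin n → R) (k : Fin n) :
    ((adjMat n d P).map Int.cast).mulVec v k = ∑ i, v (P (k, i)).1 := by
  simp only [Matrix.mulVec, dotProduct, Matrix.map_apply, adjMat, Int.cast_natCast, ← nsmul_eq_mul,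
    ← sum_const]
  exact sum_fiberwise' univ (fun i ↦ (P (k, i)).1) v

variable [DecidableEq R]

/-- The permutations whose adjacency matrix annihilates the vector `v` over `R`. -/
def nullPerms (d : ℕ) (v : Fin n → R) : Finset (Equiv.Perm (Fin n × Fin d)) :=
  {P | ((adjMat n d P).map Int.cast).mulVec v = 0}

lemma mem_nullPerms {v : Fin n → R} {P : Equiv.Perm (Fin n × Fin d)} :
    P ∈ nullPerms d v ↔ ∀ k, ∑ i, v (P (k, i)).1 = 0 := by
  simp only [nullPerms, mem_filter_univ, funext_iff, mulVec_adjMat_apply, Pi.zero_apply]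

/-- The probability that `v` is a null vector of the adjacency matrix of the directed configuration
model over `R`. -/
noncomputable def nullProb (d : ℕ) (v : Fin n → R) : ℝ := #(nullPerms d v) / (n * d)!

lemma inv_factorial_mul_sum_card {R : Type*} [CommRing R] [DecidableEq R] {n : ℕ} (d : ℕ)
    (S : Finset (Fin n → R)) :
    1 / ((n * d)! : ℝ) * ∑ v ∈ S,
        (#{P : Equiv.Perm (Fin n × Fin d) | ((adjMat n d P).map Int.cast).mulVec v = 0} : ℝ) =
      ∑ v ∈ S, nullProb d v := by
  simp only [mul_sum, nullProb, nullPerms, one_div, inv_mul_eq_div]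

lemma nullProb_nonneg (v : Fin n → R) : 0 ≤ nullProb d v := by
  unfold nullProb; positivity

lemma nullProb_zero : nullProb d (0 : Fin n → R) = 1 := by
  have : nullPerms d (0 : Fin n → R) = univ := by ext P; simp [mem_nullPerms]
  rw [nullProb, this, card_univ, Fintype.card_perm]
  simp [(Nat.factorial_pos _).ne']

end NullVectors

lemma addChar_map_sum_eq_prod {A M ι : Type*} [AddCommMonoid A] [CommMonoid M] (ψ : AddChar A M)
    (s : Finset ι) (f : ι → A) : ψ (∑ i ∈ s, f i) = ∏ i ∈ s, ψ (f i) := by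
  simpa [← ofAdd_sum] using map_prod ψ.toMonoidHom (fun i ↦ Multiplicative.ofAdd (f i)) s

section CharacterExpectation

variable {R : Type*} [CommRing R] {n d : ℕ} (ψ : AddChar R ℂ)

/-- The expectation of `ψ (w ⬝ᵥ A(P) v)` over a uniformly random permutation `P`. The bilinear form
is `∑ x, w x.1 * v (P x).1`, which is symmetric in `v` and `w` up to inverting `P`. -/
noncomputable def charExp (d : ℕ) (v w : Fin n → R) : ℂ :=
  ((n * d)! : ℂ)⁻¹ * ∑ P : Equiv.Perm (Fin n × Fin d), ∏ x, ψ (w x.1 * v (P x).1)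

lemma charExp_comm (v w : Fin n → R) : charExp ψ d v w = charExp ψ d w v := by
  unfold charExp
  rw [← Equiv.sum_comp (Equiv.inv (Equiv.Perm (Fin n × Fin d)))]
  congr 1
  refine sum_congr rfl fun P _ ↦ ?_
  rw [← Equiv.prod_comp P]
  simp [mul_comm]

lemma norm_charExp_le_one [Finite R] (v w : Fin n → R) : ‖charExp ψ d v w‖ ≤ 1 := by
  have norm_sum_le : ‖∑ P : Equiv.Perm (Fin n × Fin d), ∏ x, ψ (w x.1 * v (P x).1)‖ ≤ (n * d)! :=
    (norm_sum_le_of_le _ fun P _ ↦ (norm_prod _ _).le).trans_eq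
      (by simp [AddChar.norm_apply, Fintype.card_perm])
  rw [charExp, norm_mul, norm_inv, Complex.norm_natCast]
  exact inv_mul_le_one_of_le₀ norm_sum_le (Nat.cast_nonneg _)

variable {ψ} [Fintype R] [DecidableEq R]

lemma sum_prod_addChar_mul_apply (hψ : ψ.IsPrimitive) (P : Equiv.Perm (Fin n × Fin d))
    (v : Fin n → R) :
    ∑ w : Fin n → R, ∏ x, ψ (w x.1 * v (P x).1) =
      if P ∈ nullPerms d v then (Fintype.card R : ℂ) ^ n else 0 := by
  have group_rows (w : Fin n → R) :
      ∏ x, ψ (w x.1 * v (P x).1) = ∏ k, ψ (w k * ∑ i, v (P (k, i)).1) := by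
    simp only [Fintype.prod_prod_type, mul_sum, addChar_map_sum_eq_prod]
  simp only [group_rows, ← Fintype.prod_sum fun k s ↦ ψ (s * ∑ i, v (P (k, i)).1),
    AddChar.sum_mulShift _ hψ, mem_nullPerms]
  split_ifs with h
  · simp [h]
  · obtain ⟨k, hk⟩ := not_forall.1 h
    exact prod_eq_zero (mem_univ k) (by simp [hk])

lemma sum_charExp (hψ : ψ.IsPrimitive) (v : Fin n → R) :
    ∑ w, charExp ψ d v w = (Fintype.card R : ℂ) ^ n * nullProb d v := by
  simp only [charExp, ← mul_sum]
  rw [sum_comm]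
  simp only [sum_prod_addChar_mul_apply hψ, sum_ite_mem, univ_inter, sum_const, nsmul_eq_mul,
    nullProb]
  push_cast
  ring

lemma card_pow_mul_sum_compl_nullProb (hψ : ψ.IsPrimitive) (B : Finset (Fin n → R)) :
    (Fintype.card R : ℂ) ^ n * (∑ v ∈ Bᶜ, nullProb d v : ℝ) =
      (Fintype.card R : ℂ) ^ n * (∑ v ∈ B, nullProb d v : ℝ) -
        ∑ v ∈ B, ∑ w ∈ B, charExp ψ d v w + ∑ v ∈ Bᶜ, ∑ w ∈ Bᶜ, charExp ψ d v w := by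
  have split_rows (S : Finset (Fin n → R)) :
      (Fintype.card R : ℂ) ^ n * (∑ v ∈ S, nullProb d v : ℝ) =
        ∑ v ∈ S, ∑ w ∈ B, charExp ψ d v w + ∑ v ∈ S, ∑ w ∈ Bᶜ, charExp ψ d v w := by
    push_cast
    simp only [mul_sum, ← sum_charExp hψ, ← sum_add_distrib, sum_add_sum_compl]
  have cross_symm : ∑ v ∈ Bᶜ, ∑ w ∈ B, charExp ψ d v w = ∑ v ∈ B, ∑ w ∈ Bᶜ, charExp ψ d v w := by
    rw [sum_comm]
    simp only [fun v w ↦ charExp_comm ψ (d := d) v w]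
  rw [split_rows, split_rows, cross_symm]
  ring

lemma abs_sum_nullProb_sub_one_le_add (hψ : ψ.IsPrimitive) {B : Finset (Fin n → R)} (hB : 0 ∈ B) :
    |∑ v : Fin n → R with v ≠ 0, nullProb d v - 1| ≤
      2 * ∑ v ∈ B.erase 0, nullProb d v + (#B : ℝ) ^ 2 / (Fintype.card R : ℝ) ^ n +
        (∑ v ∈ Bᶜ, ∑ w ∈ Bᶜ, ‖charExp ψ d v w‖) / (Fintype.card R : ℝ) ^ n := by
  set q : ℝ := (Fintype.card R : ℝ) ^ n
  have q_pos : 0 < q := pow_pos (Nat.cast_pos.2 Fintype.card_pos) n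
  have sum_B : ∑ v ∈ B, nullProb d v = ∑ v ∈ B.erase 0, nullProb d v + 1 := by
    rw [← nullProb_zero (R := R) (n := n) (d := d), sum_erase_add _ _ hB]
  have sum_ne_zero : ∑ v : Fin n → R with v ≠ 0, nullProb d v + 1 =
      ∑ v ∈ B, nullProb d v + ∑ v ∈ Bᶜ, nullProb d v := by
    rw [sum_add_sum_compl, filter_ne', ← nullProb_zero (R := R) (n := n) (d := d),
      sum_erase_add _ _ (mem_univ _)]
  have identity : ((q * (∑ v : Fin n → R with v ≠ 0, nullProb d v - 1) : ℝ) : ℂ) =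
      (q * (2 * ∑ v ∈ B.erase 0, nullProb d v) : ℝ) -
        ∑ v ∈ B, ∑ w ∈ B, charExp ψ d v w + ∑ v ∈ Bᶜ, ∑ w ∈ Bᶜ, charExp ψ d v w := by
    have decomposition := card_pow_mul_sum_compl_nullProb (d := d) hψ B
    rw [eq_sub_of_add_eq sum_ne_zero, sum_B]
    rw [sum_B] at decomposition
    push_cast [q] at decomposition ⊢
    linear_combination decomposition
  have norm_sum_B : ‖∑ v ∈ B, ∑ w ∈ B, charExp ψ d v w‖ ≤ (#B : ℝ) ^ 2 := by
    refine (norm_sum_le_of_le _ fun v _ ↦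
      norm_sum_le_of_le _ fun w _ ↦ norm_charExp_le_one ψ v w).trans_eq ?_
    simp [sq]
  have norm_sum_compl : ‖∑ v ∈ Bᶜ, ∑ w ∈ Bᶜ, charExp ψ d v w‖ ≤
      ∑ v ∈ Bᶜ, ∑ w ∈ Bᶜ, ‖charExp ψ d v w‖ :=
    norm_sum_le_of_le _ fun v _ ↦ norm_sum_le _ _
  have sparse_nonneg : 0 ≤ ∑ v ∈ B.erase 0, nullProb d v := sum_nonneg fun v _ ↦ nullProb_nonneg v
  refine le_of_mul_le_mul_left ?_ q_pos
  calc q * |∑ v : Fin n → R with v ≠ 0, nullProb d v - 1|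
      = ‖((q * (∑ v : Fin n → R with v ≠ 0, nullProb d v - 1) : ℝ) : ℂ)‖ := by
        rw [Complex.norm_real, Real.norm_eq_abs, abs_mul, abs_of_pos q_pos]
    _ ≤ q * (2 * ∑ v ∈ B.erase 0, nullProb d v) + (#B : ℝ) ^ 2 +
          ∑ v ∈ Bᶜ, ∑ w ∈ Bᶜ, ‖charExp ψ d v w‖ := by
        rw [identity]
        refine norm_add_le_of_le (norm_sub_le_of_le ?_ norm_sum_B) norm_sum_compl
        rw [Complex.norm_real, Real.norm_of_nonneg (by positivity)]
    _ = _ := by field_simp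

end CharacterExpectation

section Multinomial

lemma factorial_mul_pow_le (c t : ℕ) : c ! * c ^ t ≤ t ! * c ^ c := by
  rcases le_total c t with h | h
  · calc c ! * c ^ t = c ! * c ^ (t - c) * c ^ c := by
          rw [mul_assoc, ← pow_add, Nat.sub_add_cancel h]
      _ ≤ t ! * c ^ c := Nat.mul_le_mul_right _ (Nat.factorial_mul_pow_sub_le_factorial h)
  · calc c ! * c ^ t = t ! * (c.descFactorial (c - t) * c ^ t) := by
          rw [← Nat.factorial_mul_descFactorial (Nat.sub_le c t), Nat.sub_sub_self h, mul_assoc]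
      _ ≤ t ! * (c ^ (c - t) * c ^ t) := by gcongr; exact Nat.descFactorial_le_pow c _
      _ = t ! * c ^ c := by rw [← pow_add, Nat.sub_add_cancel h]

variable {α : Type*} [Fintype α]

lemma card_piAntidiag_univ_le [DecidableEq α] (N : ℕ) :
    #(piAntidiag (univ : Finset α) N) ≤ (N + 1) ^ Fintype.card α := by
  have subset_box : piAntidiag univ N ⊆ Fintype.piFinset fun _ : α ↦ range (N + 1) := fun t ht ↦ by
    rw [Fintype.mem_piFinset]
    intro a
    rw [mem_range_succ_iff, ← (mem_piAntidiag.1 ht).1]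
    exact single_le_sum (fun _ _ ↦ Nat.zero_le _) (mem_univ a)
  simpa using card_le_card subset_box

/- Among all exponents `t` of total degree `N = ∑ a, c a`, the exponent `c` maximizes the term
`multinomial t * ∏ a, c a ^ t a` of the multinomial expansion of `N ^ N`. -/
lemma prod_factorial_mul_pow_le (c : α → ℕ) {N : ℕ} (hN : ∑ a, c a = N) :
    (∏ a, (c a)!) * N ^ N ≤ (N + 1) ^ Fintype.card α * (N ! * ∏ a, c a ^ c a) := by
  classical
  have term_le {t : α → ℕ} (ht : t ∈ piAntidiag univ N) :
      (∏ a, (c a)!) * (Nat.multinomial univ t * ∏ a, c a ^ t a) ≤ N ! * ∏ a, c a ^ c a := by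
    rw [← (mem_piAntidiag.1 ht).1, ← Nat.multinomial_spec]
    calc (∏ a, (c a)!) * (Nat.multinomial univ t * ∏ a, c a ^ t a)
        = Nat.multinomial univ t * ∏ a, (c a)! * c a ^ t a := by rw [prod_mul_distrib]; ring
      _ ≤ Nat.multinomial univ t * ∏ a, (t a)! * c a ^ c a := by
          exact Nat.mul_le_mul_left _ (prod_le_prod' fun a _ ↦ factorial_mul_pow_le _ _)
      _ = _ := by rw [prod_mul_distrib]; ring
  calc (∏ a, (c a)!) * N ^ N
      = ∑ t ∈ piAntidiag univ N, (∏ a, (c a)!) * (Nat.multinomial univ t * ∏ a, c a ^ t a) := by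
        rw [← mul_sum]
        congr 1
        rw [← hN]
        exact sum_pow_eq_sum_piAntidiag univ c _
    _ ≤ #(piAntidiag (univ : Finset α) N) * (N ! * ∏ a, c a ^ c a) := by
        rw [← smul_eq_mul, ← sum_const]
        exact sum_le_sum fun t ht ↦ term_le ht
    _ ≤ _ := Nat.mul_le_mul_right _ (card_piAntidiag_univ_le N)

end Multinomial

section EmpiricalDistribution

variable {X α : Type*} [Fintype X] [DecidableEq α]

/-- The relative frequency of the letter `a` in the word `u`. -/
noncomputable def letterFreq (u : X → α) (a : α) : ℝ := letterCount u a / Fintype.card X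

/-- The probability of the word `u` under independent letters with the letter frequencies of `u`,
i.e. `exp (-card X * H)`, where `H` is the entropy of the letter frequencies. -/
noncomputable def empProb (u : X → α) : ℝ := ∏ x, letterFreq u (u x)

lemma letterFreq_nonneg (u : X → α) (a : α) : 0 ≤ letterFreq u a := by
  unfold letterFreq; positivity

lemma letterFreq_apply_pos (u : X → α) (x : X) : 0 < letterFreq u (u x) :=
  div_pos (Nat.cast_pos.2 (card_pos.2 ⟨x, by simp⟩)) (Nat.cast_pos.2 (Fintype.card_pos_iff.2 ⟨x⟩))

lemma empProb_pos (u : X → α) : 0 < empProb u :=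
  prod_pos fun x _ ↦ letterFreq_apply_pos u x

lemma empProb_comp_fst (Y : Type*) [Fintype Y] (u : X → α) :
    empProb (fun x : X × Y ↦ u x.1) = empProb u ^ Fintype.card Y := by
  have letterFreq_fst (y : Y) (a : α) :
      letterFreq (fun x : X × Y ↦ u x.1) a = letterFreq u a := by
    have : Nonempty Y := ⟨y⟩
    have letterCount_fst :
        letterCount (fun x : X × Y ↦ u x.1) a = letterCount u a * Fintype.card Y := by
      rw [letterCount, letterCount, ← card_univ, ← card_product]
      congr 1
      ext x
      simp
    rw [letterFreq, letterFreq, letterCount_fst, Fintype.card_prod, Nat.cast_mul, Nat.cast_mul]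
    exact mul_div_mul_right _ _ (Nat.cast_ne_zero.2 Fintype.card_ne_zero)
  simp only [empProb, Fintype.prod_prod_type, ← prod_pow]
  refine prod_congr rfl fun x _ ↦ ?_
  rw [prod_congr rfl fun y _ ↦ letterFreq_fst y (u x), prod_const, card_univ]

variable [Fintype α]

lemma sum_letterFreq [Nonempty X] (u : X → α) : ∑ a, letterFreq u a = 1 := by
  simp only [letterFreq, ← sum_div, ← Nat.cast_sum, sum_letterCount]
  exact div_self (Nat.cast_ne_zero.2 Fintype.card_ne_zero)

lemma sum_letterFreq_mul (u : X → α) (g : α → ℂ) :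
    ∑ a, letterFreq u a * g a = (∑ x, g (u x)) / Fintype.card X := by
  rw [sum_comp_eq_sum_nsmul_letterCount, sum_div]
  refine sum_congr rfl fun a _ ↦ ?_
  rw [letterFreq, nsmul_eq_mul, Complex.ofReal_div, Complex.ofReal_natCast, Complex.ofReal_natCast,
    div_mul_eq_mul_div]

lemma prod_factorial_letterCount_le (u : X → α) :
    ((∏ a, (letterCount u a)! : ℕ) : ℝ) ≤
      (Fintype.card X + 1) ^ Fintype.card α * (empProb u * (Fintype.card X)!) := by
  set N := Fintype.card X
  have hN : 0 < (N : ℝ) ^ N := by exact_mod_cast Nat.pow_self_pos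
  have empProb_eq : empProb u * (N : ℝ) ^ N = ∏ a, (letterCount u a : ℝ) ^ letterCount u a := by
    rw [empProb, ← prod_comp_eq_prod_pow_letterCount u fun a ↦ (letterCount u a : ℝ)]
    simp only [letterFreq, prod_div_distrib, prod_const, card_univ]
    exact div_mul_cancel₀ _ hN.ne'
  refine le_of_mul_le_mul_right ?_ hN
  have h := prod_factorial_mul_pow_le (letterCount u) (sum_letterCount u)
  calc _ ≤ ((N + 1) ^ Fintype.card α * (N ! * ∏ a, letterCount u a ^ letterCount u a) : ℝ) := by
        exact_mod_cast h
    _ = _ := by push_cast; rw [← empProb_eq]; ring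

lemma prod_le_exp_sum_sub_one {y : X → ℝ} (hy : ∀ x, 0 ≤ y x) :
    ∏ x, y x ≤ Real.exp (∑ x, (y x - 1)) := by
  rw [Real.exp_sum]
  exact prod_le_prod (fun x _ ↦ hy x) fun x _ ↦ by linarith [Real.add_one_le_exp (y x - 1)]

lemma prod_comp_le_empProb (u : X → α) {g : α → ℝ} (hg : ∀ a, 0 ≤ g a) (hg_sum : ∑ a, g a ≤ 1) :
    ∏ x, g (u x) ≤ empProb u := by
  have sum_ratio_le : ∑ x, g (u x) / letterFreq u (u x) ≤ Fintype.card X := by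
    calc ∑ x, g (u x) / letterFreq u (u x)
        = ∑ a, letterCount u a • (g a / letterFreq u a) :=
          sum_comp_eq_sum_nsmul_letterCount u fun a ↦ g a / letterFreq u a
      _ ≤ ∑ a, Fintype.card X * g a := by
          refine sum_le_sum fun a _ ↦ ?_
          rw [nsmul_eq_mul, letterFreq]
          rcases (letterCount u a).eq_zero_or_pos with h | h
          · simpa [h] using mul_nonneg (Nat.cast_nonneg _) (hg a)
          · exact le_of_eq (by field_simp)
      _ ≤ Fintype.card X := by
          rw [← mul_sum]
          exact mul_le_of_le_one_right (Nat.cast_nonneg _) hg_sum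
  have prod_ratio_le : ∏ x, g (u x) / letterFreq u (u x) ≤ 1 := by
    refine (prod_le_exp_sum_sub_one fun x ↦ div_nonneg (hg _) (letterFreq_nonneg _ _)).trans ?_
    rw [Real.exp_le_one_iff, sum_sub_distrib]
    simpa using sum_ratio_le
  rw [prod_div_distrib] at prod_ratio_le
  exact (div_le_one (empProb_pos u)).1 prod_ratio_le

lemma sum_empProb_le (X α : Type*) [Fintype X] [DecidableEq X] [Nonempty X] [Fintype α]
    [DecidableEq α] :
    ∑ u : X → α, empProb u ≤ (Fintype.card X + 1) ^ Fintype.card α := by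
  have sum_fiber_le {c : α → ℕ} (hc : c ∈ piAntidiag univ (Fintype.card X)) :
      ∑ u : X → α with letterCount u = c, empProb u ≤ 1 := by
    have sum_c : ∑ a, (c a : ℝ) / Fintype.card X = 1 := by
      rw [← sum_div, ← Nat.cast_sum, (mem_piAntidiag.1 hc).1]
      exact div_self (Nat.cast_ne_zero.2 Fintype.card_ne_zero)
    calc ∑ u : X → α with letterCount u = c, empProb u
        = ∑ u : X → α with letterCount u = c, ∏ x, (c (u x) : ℝ) / Fintype.card X := by
          refine sum_congr rfl fun u hu ↦ ?_
          simp only [empProb, letterFreq, (mem_filter.1 hu).2]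
      _ ≤ ∑ u : X → α, ∏ x, (c (u x) : ℝ) / Fintype.card X :=
          sum_le_sum_of_subset_of_nonneg (filter_subset _ _) fun _ _ _ ↦ by positivity
      _ = 1 := by rw [← Fintype.prod_sum fun _ a ↦ (c a : ℝ) / Fintype.card X]; simp [sum_c]
  calc ∑ u : X → α, empProb u
      = ∑ c ∈ piAntidiag univ (Fintype.card X), ∑ u : X → α with letterCount u = c, empProb u :=
        (sum_fiberwise_of_maps_to (fun u _ ↦ by simp [sum_letterCount]) _).symm
    _ ≤ #(piAntidiag (univ : Finset α) (Fintype.card X)) := by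
        simpa using sum_le_sum fun c hc ↦ sum_fiber_le (c := c) hc
    _ ≤ _ := by exact_mod_cast card_piAntidiag_univ_le (Fintype.card X)

end EmpiricalDistribution

section CharacterBounds

variable {R : Type*} [CommRing R] {n d : ℕ}

lemma norm_sq_sum_eq {ι : Type*} (s : Finset ι) (f : ι → ℂ) :
    ((‖∑ i ∈ s, f i‖ ^ 2 : ℝ) : ℂ) = ∑ i ∈ s, ∑ j ∈ s, f i * starRingEnd ℂ (f j) := by
  push_cast
  rw [← Complex.mul_conj', map_sum, sum_mul_sum]

section Dispersion

variable (ψ : AddChar R ℂ)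

/-- The gap `1 - Re (ψ x)`, which measures how far the character value `ψ x` is from `1`. -/
noncomputable def charGap (x : R) : ℝ := 1 - (ψ x).re

/-- The dispersion of a pair of vectors: the sum of the character gaps of all products of a
difference of entries of `v` with a difference of entries of `w`. It controls the decay of
`charExp ψ d v w`. -/
noncomputable def dispersion (v w : Fin n → R) : ℝ :=
  ∑ i, ∑ j, ∑ k, ∑ l, charGap ψ ((v i - v j) * (w k - w l))

lemma dispersion_comm (v w : Fin n → R) : dispersion ψ v w = dispersion ψ w v := by
  simp only [dispersion]
  calc _ = ∑ i, ∑ k, ∑ j, ∑ l, charGap ψ ((v i - v j) * (w k - w l)) :=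
        sum_congr rfl fun i _ ↦ sum_comm
    _ = ∑ k, ∑ i, ∑ l, ∑ j, charGap ψ ((v i - v j) * (w k - w l)) := by
        rw [sum_comm]
        exact sum_congr rfl fun k _ ↦ sum_congr rfl fun i _ ↦ sum_comm
    _ = ∑ k, ∑ l, ∑ i, ∑ j, charGap ψ ((w k - w l) * (v i - v j)) := by
        simp only [mul_comm (w _ - w _)]
        exact sum_congr rfl fun k _ ↦ sum_comm

variable [Finite R]

lemma charGap_nonneg (x : R) : 0 ≤ charGap ψ x := by
  have := Complex.re_le_norm (ψ x)
  rw [AddChar.norm_apply] at this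
  exact sub_nonneg.2 this

lemma dispersion_nonneg (v w : Fin n → R) : 0 ≤ dispersion ψ v w := by
  unfold dispersion
  exact sum_nonneg fun i _ ↦ sum_nonneg fun j _ ↦ sum_nonneg fun k _ ↦ sum_nonneg fun l _ ↦
    charGap_nonneg ψ _

lemma addChar_mul_conj (x y : R) : ψ x * starRingEnd ℂ (ψ y) = ψ (x - y) := by
  rw [← AddChar.map_neg_eq_conj, ← AddChar.map_add_eq_mul, sub_eq_add_neg]

lemma norm_sum_addChar_mul_le [NeZero n] (w : Fin n → R) (t : R) :
    ‖∑ k, ψ (t * w k)‖ ≤ n - (∑ k, ∑ l, charGap ψ (t * (w k - w l))) / (2 * n) := by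
  have hn : (0 : ℝ) < n := Nat.cast_pos.2 (NeZero.pos n)
  have norm_sq : ‖∑ k, ψ (t * w k)‖ ^ 2 = n ^ 2 - ∑ k, ∑ l, charGap ψ (t * (w k - w l)) := by
    have := congrArg Complex.re (norm_sq_sum_eq univ fun k ↦ ψ (t * w k))
    rw [Complex.ofReal_re] at this
    simp [this, addChar_mul_conj, charGap, mul_sub, sq]
  rw [le_sub_comm, div_le_iff₀ (by positivity)]
  nlinarith [sq_nonneg (n - ‖∑ k, ψ (t * w k)‖)]

lemma sum_norm_sq_sum_mul_addChar_le (v w : Fin n → R) {y : Fin n → ℂ} (hy : ∀ i, ‖y i‖ = 1) :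
    ∑ k, ‖∑ i, y i * ψ (w k * v i)‖ ^ 2 ≤ ∑ i, ∑ j, ‖∑ k, ψ ((v i - v j) * w k)‖ := by
  have expand : ((∑ k, ‖∑ i, y i * ψ (w k * v i)‖ ^ 2 : ℝ) : ℂ) =
      ∑ i, ∑ j, y i * starRingEnd ℂ (y j) * ∑ k, ψ ((v i - v j) * w k) := by
    rw [Complex.ofReal_sum]
    simp only [norm_sq_sum_eq, mul_sum]
    rw [sum_comm]
    refine sum_congr rfl fun i _ ↦ ?_
    rw [sum_comm]
    refine sum_congr rfl fun j _ ↦ sum_congr rfl fun k _ ↦ ?_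
    rw [mul_comm (v i - v j), mul_sub, ← addChar_mul_conj, map_mul (starRingEnd ℂ)]
    ring
  rw [← Complex.norm_of_nonneg (by positivity : 0 ≤ ∑ k, ‖∑ i, y i * ψ (w k * v i)‖ ^ 2), expand]
  refine norm_sum_le_of_le _ fun i _ ↦ norm_sum_le_of_le _ fun j _ ↦ ?_
  rw [norm_mul, norm_mul, RCLike.norm_conj, hy, hy, one_mul, one_mul]

end Dispersion

variable [Fintype R]

lemma norm_charExp_le_of_weight [DecidableEq R] (ψ : AddChar R ℂ) (v w : Fin n → R) (r : R → ℝ)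
    (hr : ∀ k, 0 < r (v k)) {K : ℝ}
    (hK : ∀ z : R → ℂ, (∀ a, ‖z a‖ = 1) → ∏ k, ‖∑ a, z a * (r a * ψ (w k * a))‖ ≤ K) :
    ‖charExp ψ d v w‖ ≤
      (n * d + 1) ^ Fintype.card R * (empProb v * (∏ k, r (v k))⁻¹ * K) ^ d := by
  have prod_fst (g : Fin n → ℝ) : ∏ x : Fin n × Fin d, g x.1 = (∏ k, g k) ^ d := by
    simp [Fintype.prod_prod_type, prod_pow]
  have K_nonneg : 0 ≤ K := (prod_nonneg fun _ _ ↦ norm_nonneg _).trans (hK (fun _ ↦ 1) (by simp))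
  have r_pos : 0 < ∏ k, r (v k) := prod_pos fun k _ ↦ hr k
  have norm_sum_le := norm_sum_perm_prod_le (fun x : Fin n × Fin d ↦ v x.1)
    (fun x a ↦ ψ (w x.1 * a)) r (fun x ↦ hr x.1) (K := K ^ d) fun z hz ↦ by
      rw [prod_fst fun k ↦ ‖∑ a, z a * (r a * ψ (w k * a))‖]
      exact pow_le_pow_left₀ (prod_nonneg fun _ _ ↦ norm_nonneg _) (hK z hz) d
  have factorial_le := prod_factorial_letterCount_le fun x : Fin n × Fin d ↦ v x.1
  simp only [Fintype.card_prod, Fintype.card_fin, empProb_comp_fst, Nat.cast_mul] at factorial_le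
  rw [charExp, norm_mul, norm_inv, Complex.norm_natCast, inv_mul_le_iff₀ (by positivity)]
  calc _ ≤ _ := norm_sum_le
    _ ≤ (n * d + 1) ^ Fintype.card R * (empProb v ^ d * (n * d)!) * ((∏ k, r (v k)) ^ d)⁻¹ *
          K ^ d := by
        rw [prod_fst fun k ↦ r (v k)]
        gcongr
    _ = _ := by rw [mul_pow, mul_pow, inv_pow]; ring

lemma sum_norm_sq_sum_letterFreq_le [DecidableEq R] [NeZero n] (ψ : AddChar R ℂ) (v w : Fin n → R)
    {z : R → ℂ} (hz : ∀ a, ‖z a‖ = 1) :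
    ∑ k, ‖∑ a, z a * (letterFreq v a * ψ (w k * a))‖ ^ 2 ≤ n - dispersion ψ v w / (2 * n ^ 3) := by
  have hn : (0 : ℝ) < n := Nat.cast_pos.2 (NeZero.pos n)
  have sum_letters (k : Fin n) : ‖∑ a, z a * (letterFreq v a * ψ (w k * a))‖ ^ 2 =
      ‖∑ i, z (v i) * ψ (w k * v i)‖ ^ 2 / n ^ 2 := by
    simp only [mul_left_comm (z _)]
    rw [sum_letterFreq_mul v fun a ↦ z a * ψ (w k * a), norm_div, div_pow, Fintype.card_fin,
      Complex.norm_natCast]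
  simp only [sum_letters, ← sum_div]
  rw [div_le_iff₀ (by positivity)]
  calc ∑ k, ‖∑ i, z (v i) * ψ (w k * v i)‖ ^ 2
      ≤ ∑ i, ∑ j, ‖∑ k, ψ ((v i - v j) * w k)‖ :=
        sum_norm_sq_sum_mul_addChar_le ψ v w fun i ↦ hz (v i)
    _ ≤ ∑ i, ∑ j, (n - (∑ k, ∑ l, charGap ψ ((v i - v j) * (w k - w l))) / (2 * n)) :=
        sum_le_sum fun i _ ↦ sum_le_sum fun j _ ↦ norm_sum_addChar_mul_le ψ w _
    _ = n * n * n - dispersion ψ v w / (2 * n) := by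
        simp [sum_sub_distrib, ← sum_div, dispersion, mul_assoc]
    _ = _ := by field_simp

lemma norm_charExp_le_exp_dispersion [NeZero n] (ψ : AddChar R ℂ) (v w : Fin n → R) :
    ‖charExp ψ d v w‖ ≤ (n * d + 1) ^ Fintype.card R *
      Real.exp (-(dispersion ψ v w / (4 * n ^ 3))) ^ d := by
  classical
  set E := Real.exp (-(dispersion ψ v w / (4 * n ^ 3)))
  have prod_le (z : R → ℂ) (hz : ∀ a, ‖z a‖ = 1) :
      ∏ k, ‖∑ a, z a * (letterFreq v a * ψ (w k * a))‖ ≤ E := by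
    refine le_of_pow_le_pow_left₀ two_ne_zero (Real.exp_nonneg _) ?_
    calc (∏ k, ‖∑ a, z a * (letterFreq v a * ψ (w k * a))‖) ^ 2
        = ∏ k, ‖∑ a, z a * (letterFreq v a * ψ (w k * a))‖ ^ 2 := (prod_pow _ _ _).symm
      _ ≤ Real.exp (∑ k, (‖∑ a, z a * (letterFreq v a * ψ (w k * a))‖ ^ 2 - 1)) :=
          prod_le_exp_sum_sub_one fun k ↦ sq_nonneg _
      _ ≤ Real.exp (2 * -(dispersion ψ v w / (4 * n ^ 3))) := by
          refine Real.exp_le_exp.2 ?_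
          have := sum_norm_sq_sum_letterFreq_le ψ v w hz
          rw [sum_sub_distrib, sum_const, card_univ, Fintype.card_fin, nsmul_one]
          have : dispersion ψ v w / (2 * n ^ 3) = 2 * (dispersion ψ v w / (4 * n ^ 3)) := by ring
          linarith
      _ = E ^ 2 := by rw [← Real.exp_nat_mul]; norm_num
  have h := norm_charExp_le_of_weight (d := d) ψ v w (letterFreq v) (letterFreq_apply_pos v) prod_le
  rwa [← empProb, mul_inv_cancel₀ (empProb_pos v).ne', one_mul] at h

lemma sum_norm_sq_sum_mul_addChar {ψ : AddChar R ℂ} (hψ : ψ.IsPrimitive) (c : R → ℂ) :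
    ∑ b, ‖∑ a, c a * ψ (b * a)‖ ^ 2 = Fintype.card R * ∑ a, ‖c a‖ ^ 2 := by
  classical
  have orthogonality (a a' : R) :
      ∑ b, c a * ψ (b * a) * starRingEnd ℂ (c a' * ψ (b * a')) =
        if a = a' then Fintype.card R * (c a * starRingEnd ℂ (c a)) else 0 := by
    calc _ = c a * starRingEnd ℂ (c a') * ∑ b, ψ (b * (a - a')) := by
          rw [mul_sum]
          refine sum_congr rfl fun b _ ↦ ?_
          rw [mul_sub, ← addChar_mul_conj, map_mul (starRingEnd ℂ)]
          ring
      _ = _ := by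
          rw [AddChar.sum_mulShift _ hψ]
          split_ifs <;> simp_all [sub_eq_zero, mul_comm]
  rw [← Complex.ofReal_inj, Complex.ofReal_sum]
  simp only [norm_sq_sum_eq]
  rw [sum_comm]
  have diagonal (a : R) : ∑ b, ∑ a', c a * ψ (b * a) * starRingEnd ℂ (c a' * ψ (b * a')) =
      Fintype.card R * (c a * starRingEnd ℂ (c a)) := by
    rw [sum_comm]
    simp only [orthogonality, sum_ite_eq, mem_univ, if_true]
  simp only [diagonal, Complex.mul_conj']
  push_cast
  rw [mul_sum]

variable [DecidableEq R]

lemma prod_norm_sq_sum_sqrt_letterFreq_le [NeZero n] {ψ : AddChar R ℂ} (hψ : ψ.IsPrimitive)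
    (v w : Fin n → R) {z : R → ℂ} (hz : ∀ a, ‖z a‖ = 1) :
    ∏ k, ‖∑ a, z a * (√(letterFreq v a) * ψ (w k * a))‖ ^ 2 ≤
      empProb w * (Fintype.card R : ℝ) ^ n := by
  have card_pos : (0 : ℝ) < Fintype.card R := Nat.cast_pos.2 Fintype.card_pos
  set F : R → ℝ := fun b ↦ ‖∑ a, z a * (√(letterFreq v a) * ψ (b * a))‖ ^ 2
  have sum_F : ∑ b, F b = Fintype.card R := by
    have parseval := sum_norm_sq_sum_mul_addChar hψ fun a ↦ z a * √(letterFreq v a)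
    simpa [F, mul_assoc, hz, Real.sq_sqrt, letterFreq_nonneg, sum_letterFreq] using parseval
  have gibbs : ∏ k, F (w k) / Fintype.card R ≤ empProb w :=
    prod_comp_le_empProb w (g := fun b ↦ F b / Fintype.card R) (fun b ↦ by positivity)
      (by rw [← sum_div, sum_F, div_self card_pos.ne'])
  rwa [prod_div_distrib, prod_const, card_univ, Fintype.card_fin,
    div_le_iff₀ (by positivity)] at gibbs

lemma norm_charExp_le_sqrt_empProb [NeZero n] {ψ : AddChar R ℂ} (hψ : ψ.IsPrimitive)
    (v w : Fin n → R) :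
    ‖charExp ψ d v w‖ ≤ (n * d + 1) ^ Fintype.card R *
      √(empProb v * empProb w * Fintype.card R ^ n) ^ d := by
  have prod_le (z : R → ℂ) (hz : ∀ a, ‖z a‖ = 1) :
      ∏ k, ‖∑ a, z a * (√(letterFreq v a) * ψ (w k * a))‖ ≤
        √(empProb w * (Fintype.card R : ℝ) ^ n) := by
    refine Real.le_sqrt_of_sq_le ?_
    rw [← prod_pow]
    exact prod_norm_sq_sum_sqrt_letterFreq_le hψ v w hz
  have h := norm_charExp_le_of_weight (d := d) ψ v w (fun a ↦ √(letterFreq v a))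
    (fun k ↦ Real.sqrt_pos.2 (letterFreq_apply_pos v k)) prod_le
  have prod_sqrt : ∏ k, √(letterFreq v (v k)) = √(empProb v) :=
    (Real.sqrt_prod _ fun k _ ↦ letterFreq_nonneg v (v k)).symm
  rwa [prod_sqrt, ← div_eq_mul_inv, Real.div_sqrt, ← Real.sqrt_mul (empProb_pos v).le,
    ← mul_assoc] at h

/- Interpolation: `f ^ d = f ^ (d - 2) * f ^ 2 ≤ (E ^ (d - 2) * Y) ^ d`. -/
lemma le_mul_of_le_pow_of_le_sqrt_pow (hd : 3 ≤ d) {f E Y : ℝ} (hf : 0 ≤ f) (hE₀ : 0 ≤ E)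
    (hE₁ : E ≤ 1) (hY : 0 ≤ Y) (hfE : f ≤ E ^ d) (hfY : f ≤ √Y ^ d) : f ≤ E * Y := by
  have pow_le : f ^ d ≤ (E ^ (d - 2) * Y) ^ d := by
    calc f ^ d = f ^ (d - 2) * f ^ 2 := by rw [← pow_add, Nat.sub_add_cancel (by omega)]
      _ ≤ (E ^ d) ^ (d - 2) * (√Y ^ d) ^ 2 := by gcongr
      _ = (E ^ (d - 2) * Y) ^ d := by
        rw [← pow_mul √Y, mul_comm d 2, pow_mul √Y, Real.sq_sqrt hY, mul_pow, ← pow_mul, ← pow_mul,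
          mul_comm d]
  calc f ≤ E ^ (d - 2) * Y := le_of_pow_le_pow_left₀ (by omega) (by positivity) pow_le
    _ ≤ E * Y := by
      gcongr
      exact pow_le_of_le_one hE₀ hE₁ (by omega)

lemma norm_charExp_le [NeZero n] (hd : 3 ≤ d) {ψ : AddChar R ℂ} (hψ : ψ.IsPrimitive)
    (v w : Fin n → R) :
    ‖charExp ψ d v w‖ ≤ (n * d + 1) ^ Fintype.card R *
      (Real.exp (-(dispersion ψ v w / (4 * n ^ 3))) *
        (empProb v * empProb w * Fintype.card R ^ n)) := by
  have L_pos : (0 : ℝ) < (n * d + 1) ^ Fintype.card R := by positivity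
  have E_le_one : Real.exp (-(dispersion ψ v w / (4 * n ^ 3))) ≤ 1 := by
    rw [Real.exp_le_one_iff, neg_nonpos]
    exact div_nonneg (dispersion_nonneg ψ v w) (by positivity)
  have Y_nonneg : 0 ≤ empProb v * empProb w * Fintype.card R ^ n :=
    mul_nonneg (mul_pos (empProb_pos v) (empProb_pos w)).le (by positivity)
  rw [← div_le_iff₀' L_pos]
  refine le_mul_of_le_pow_of_le_sqrt_pow hd (by positivity) (Real.exp_nonneg _) E_le_one Y_nonneg
    ?_ ?_
  · exact (div_le_iff₀' L_pos).2 (norm_charExp_le_exp_dispersion ψ v w)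
  · exact (div_le_iff₀' L_pos).2 (norm_charExp_le_sqrt_empProb hψ v w)

end CharacterBounds

section DispersionLowerBounds

variable {n : ℕ}

lemma card_filter_mul_le_sum {ι : Type*} [Fintype ι] (Q : ι → Prop) [DecidablePred Q] {f : ι → ℝ}
    {T : ℝ} (hf : ∀ i, 0 ≤ f i) (hT : ∀ i, Q i → T ≤ f i) : #{i | Q i} * T ≤ ∑ i, f i := by
  calc (#{i | Q i} : ℝ) * T = ∑ i with Q i, T := by rw [sum_const, nsmul_eq_mul]
    _ ≤ ∑ i with Q i, f i := sum_le_sum fun i hi ↦ hT i (mem_filter.1 hi).2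
    _ ≤ ∑ i, f i := sum_le_univ_sum_of_nonneg hf

lemma mul_le_sum_sum_sub {G : Type*} [Sub G] (w : Fin n → G) (Q : G → Prop) [DecidablePred Q]
    {F : G → ℝ} {s T : ℝ} (hF : ∀ x, 0 ≤ F x) (hT : 0 ≤ T) (hs : ∀ k, s ≤ #{l | Q (w k - w l)})
    (hQ : ∀ x, Q x → T ≤ F x) : n * (s * T) ≤ ∑ k, ∑ l, F (w k - w l) := by
  calc n * (s * T) = ∑ _k : Fin n, s * T := by simp
    _ ≤ ∑ k, #{l | Q (w k - w l)} * T :=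
        sum_le_sum fun k _ ↦ mul_le_mul_of_nonneg_right (hs k) hT
    _ ≤ ∑ k, ∑ l, F (w k - w l) :=
        sum_le_sum fun k _ ↦ card_filter_mul_le_sum _ (fun l ↦ hF _) fun l ↦ hQ _

lemma mul_le_dispersion {R : Type*} [CommRing R] [Finite R] [DecidableEq R] (ψ : AddChar R ℂ)
    (v w : Fin n → R) {s T : ℝ} (hT : 0 ≤ T) (hs : ∀ c, s ≤ hammingDist v fun _ ↦ c)
    (hw : ∀ t ≠ 0, T ≤ ∑ k, ∑ l, charGap ψ (t * (w k - w l))) :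
    n * (s * T) ≤ dispersion ψ v w := by
  refine mul_le_sum_sum_sub v (· ≠ 0) (F := fun t ↦ ∑ k, ∑ l, charGap ψ (t * (w k - w l)))
    (fun t ↦ sum_nonneg fun k _ ↦ sum_nonneg fun l _ ↦ charGap_nonneg ψ _) hT (fun i ↦ ?_) hw
  simpa only [hammingDist, sub_ne_zero, ne_comm] using hs (v i)

variable {p : ℕ} [NeZero p]

/-- A translated Bohr set: the residues `x` for which `t * (b - x)` lies within distance `p / q` of
`0`. The inequality is multiplied out to avoid division. -/
def bohrSet (q : ℕ) (t b : ZMod p) : Finset (ZMod p) :=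
  {x | (t * (b - x)).valMinAbs.natAbs * q < p}

lemma mem_bohrSet {q : ℕ} {t b x : ZMod p} :
    x ∈ bohrSet q t b ↔ (t * (b - x)).valMinAbs.natAbs * q < p := by
  simp [bohrSet]

lemma sq_div_le_charGap (x : ZMod p) :
    8 * (x.valMinAbs : ℝ) ^ 2 / p ^ 2 ≤ charGap ZMod.stdAddChar x := by
  have hp : (0 : ℝ) < p := Nat.cast_pos.2 (NeZero.pos p)
  set θ : ℝ := 2 * Real.pi * x.valMinAbs / p
  have charGap_eq : charGap ZMod.stdAddChar x = 1 - Real.cos θ := by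
    rw [charGap, ← Complex.exp_ofReal_mul_I_re]
    conv_lhs => rw [← ZMod.coe_valMinAbs x, ZMod.stdAddChar_coe]
    congr 3
    push_cast [θ]
    ring
  have abs_le : |(x.valMinAbs : ℝ)| ≤ p / 2 := by
    rw [← Int.cast_abs, ← Nat.cast_natAbs]
    exact (Nat.cast_le.2 (ZMod.natAbs_valMinAbs_le x)).trans Nat.cast_div_le
  have abs_θ_le : |θ| ≤ Real.pi := by
    rw [abs_div, abs_mul, abs_of_pos Real.two_pi_pos, abs_of_pos hp, div_le_iff₀ hp]
    nlinarith [Real.pi_pos]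
  have cos_le := Real.cos_le_one_sub_mul_cos_sq abs_θ_le
  have : 2 / Real.pi ^ 2 * θ ^ 2 = 8 * (x.valMinAbs : ℝ) ^ 2 / p ^ 2 := by
    simp only [θ]
    field_simp
    ring
  linarith

lemma div_sq_le_charGap {q : ℕ} {x : ZMod p} (hx : p ≤ x.valMinAbs.natAbs * q) :
    8 / (q : ℝ) ^ 2 ≤ charGap ZMod.stdAddChar x := by
  have hp : (0 : ℝ) < p := Nat.cast_pos.2 (NeZero.pos p)
  have hq : (0 : ℝ) < q :=
    Nat.cast_pos.2 <| Nat.pos_of_ne_zero fun h ↦ NeZero.ne p (by simpa [h] using hx)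
  have le_abs_mul : (p : ℝ) ≤ |(x.valMinAbs : ℝ)| * q := by
    rw [← Int.cast_abs, ← Nat.cast_natAbs]
    exact_mod_cast hx
  refine le_trans ?_ (sq_div_le_charGap x)
  rw [div_le_div_iff₀ (by positivity) (by positivity), mul_assoc, ← sq_abs (x.valMinAbs : ℝ),
    ← mul_pow]
  gcongr

lemma mul_le_dispersion_of_le_card_notMem_bohrSet (q : ℕ) {v w : Fin n → ZMod p} {s u : ℝ}
    (hu : 0 ≤ u) (hv : ∀ c, s ≤ hammingDist v fun _ ↦ c)
    (hw : ∀ t ≠ 0, ∀ b, u ≤ #{k | w k ∉ bohrSet q t b}) :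
    n * (s * (n * (u * (8 / q ^ 2)))) ≤ dispersion ZMod.stdAddChar v w := by
  refine mul_le_dispersion _ v w (by positivity) hv fun t ht ↦ ?_
  refine mul_le_sum_sum_sub w (fun x ↦ p ≤ (t * x).valMinAbs.natAbs * q)
    (fun x ↦ charGap_nonneg _ _) (by positivity) (fun k ↦ ?_) fun x ↦ div_sq_le_charGap
  simpa only [mem_bohrSet, not_lt] using hw t ht (w k)

end DispersionLowerBounds

section BohrSets

variable {p : ℕ} [Fact p.Prime] {t : ZMod p}

lemma bohrSet_self (ht : t ≠ 0) (b : ZMod p) : bohrSet p t b = {b} := by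
  ext x
  rw [mem_bohrSet, mem_singleton, mul_lt_iff_lt_one_left (NeZero.pos p), Nat.lt_one_iff,
    Int.natAbs_eq_zero, ZMod.valMinAbs_eq_zero, mul_eq_zero_iff_left ht, sub_eq_zero, eq_comm]

lemma card_bohrSet_le {q : ℕ} (hq : 0 < q) (hqp : q ≤ p) (ht : t ≠ 0) (b : ZMod p) :
    (#(bohrSet q t b) : ℝ) ≤ 3 * p / q := by
  have hq' : (0 : ℝ) < q := Nat.cast_pos.2 hq
  have card_le : #(bohrSet q t b) ≤ #(Icc (-(p / q : ℕ) : ℤ) (p / q : ℕ)) := by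
    refine card_le_card_of_injOn (fun x ↦ (t * (b - x)).valMinAbs) (fun x hx ↦ ?_) ?_
    · have := (Nat.le_div_iff_mul_le hq).2 (mem_bohrSet.1 hx).le
      simp only [coe_Icc, Set.mem_Icc]
      omega
    · exact fun x _ y _ hxy ↦
        sub_right_injective (mul_left_cancel₀ ht (ZMod.injective_valMinAbs hxy))
  rw [Int.card_Icc] at card_le
  have card_le' : (#(bohrSet q t b) : ℝ) ≤ 2 * (p / q : ℕ) + 1 := by norm_cast; omega
  have div_le : ((p / q : ℕ) : ℝ) ≤ p / q := Nat.cast_div_le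
  have one_le : (1 : ℝ) ≤ p / q := (one_le_div hq').2 (Nat.cast_le.2 hqp)
  rw [mul_div_assoc]
  linarith

end BohrSets

section ExceptionalVectors

lemma card_filter_le_card_mul_rpow_le {ι α : Type*} [Fintype ι] [DecidableEq ι] [Fintype α]
    [DecidableEq α] (T : Finset α) {μ : ℝ} (hμ : 1 ≤ μ) (m : ℝ) :
    #{v : ι → α | m ≤ #{k | v k ∈ T}} * μ ^ m ≤
      (μ * #T + Fintype.card α) ^ Fintype.card ι := by
  have : 0 < μ := by linarith
  have weight_nonneg (x : α) : 0 ≤ if x ∈ T then μ else 1 := by split_ifs <;> linarith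
  calc #{v : ι → α | m ≤ #{k | v k ∈ T}} * μ ^ m
      ≤ ∑ v : ι → α, ∏ k, if v k ∈ T then μ else 1 := by
        refine card_filter_mul_le_sum _ (fun v ↦ prod_nonneg fun k _ ↦ weight_nonneg _)
          fun v hv ↦ ?_
        rw [prod_ite, prod_const, prod_const_one, mul_one, ← Real.rpow_natCast]
        exact Real.rpow_le_rpow_of_exponent_le hμ hv
    _ = (∑ x : α, if x ∈ T then μ else 1) ^ Fintype.card ι := by
        rw [← Fintype.prod_sum fun (_ : ι) x ↦ if x ∈ T then μ else 1, prod_const, card_univ]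
    _ ≤ (∑ x : α, ((if x ∈ T then μ else 0) + 1)) ^ Fintype.card ι := by
        refine pow_le_pow_left₀ (sum_nonneg fun x _ ↦ weight_nonneg x)
          (sum_le_sum fun x _ ↦ ?_) _
        split_ifs <;> linarith
    _ = _ := by simp [sum_add_distrib, mul_comm]

lemma card_filter_exists_le {ι β : Type*} [Fintype ι] [Fintype β] (Q : β → ι → Prop)
    [∀ b, DecidablePred (Q b)] [DecidablePred fun i ↦ ∃ b, Q b i] {K : ℝ}
    (hK : ∀ b, (#{i | Q b i} : ℝ) ≤ K) : (#{i | ∃ b, Q b i} : ℝ) ≤ Fintype.card β * K := by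
  classical
  have filter_eq : ({i | ∃ b, Q b i} : Finset ι) = univ.biUnion fun b ↦ {i | Q b i} := by
    ext i
    simp
  calc (#{i | ∃ b, Q b i} : ℝ) ≤ ∑ b, (#{i | Q b i} : ℝ) := by
        rw [filter_eq]
        exact_mod_cast card_biUnion_le
    _ ≤ ∑ _b : β, K := sum_le_sum fun b _ ↦ hK b
    _ = _ := by simp

variable {n p : ℕ}

lemma card_filter_eq_add_hammingDist {α : Type*} [DecidableEq α] (v : Fin n → α) (c : α) :
    #{k | v k = c} + hammingDist v (fun _ ↦ c) = n := by
  simpa [hammingDist] using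
    card_filter_add_card_filter_not (s := (univ : Finset (Fin n))) fun k ↦ v k = c

section NearConst

variable [NeZero p]

open Classical in
/-- The vectors that differ from some constant vector in at most `a` coordinates. -/
noncomputable def nearConst (n p : ℕ) [NeZero p] (a : ℝ) : Finset (Fin n → ZMod p) :=
  {v | ∃ c, (hammingDist v fun _ ↦ c : ℝ) ≤ a}

lemma mem_nearConst {a : ℝ} {v : Fin n → ZMod p} :
    v ∈ nearConst n p a ↔ ∃ c, (hammingDist v fun _ ↦ c : ℝ) ≤ a := by
  simp [nearConst]

lemma le_hammingDist_of_notMem_nearConst {a : ℝ} {v : Fin n → ZMod p} (hv : v ∉ nearConst n p a)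
    (c : ZMod p) : a ≤ hammingDist v fun _ ↦ c := by
  rw [mem_nearConst, not_exists] at hv
  exact (not_le.1 (hv c)).le

lemma card_nearConst_le (n p : ℕ) [NeZero p] (a : ℝ) {μ : ℝ} (hμ : 1 ≤ μ) :
    (#(nearConst n p a) : ℝ) ≤ p * ((1 + p / μ) ^ n * μ ^ a) := by
  have hμ₀ : 0 < μ := by linarith
  have card_le (c : ZMod p) : (#{v : Fin n → ZMod p | n - a ≤ #{k | v k ∈ ({c} : Finset _)}} : ℝ) ≤
      (1 + p / μ) ^ n * μ ^ a := by
    have markov := card_filter_le_card_mul_rpow_le (ι := Fin n) {c} hμ (n - a)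
    rw [card_singleton, Nat.cast_one, mul_one, ZMod.card, Fintype.card_fin,
      ← le_div_iff₀ (by positivity), Real.rpow_sub hμ₀, Real.rpow_natCast, div_div_eq_mul_div,
      mul_div_right_comm, ← div_pow, add_div, div_self hμ₀.ne'] at markov
    exact markov
  refine le_trans ?_ ((card_filter_exists_le _ card_le).trans_eq (by rw [ZMod.card]))
  refine Nat.cast_le.2 (card_le_card fun v hv ↦ ?_)
  obtain ⟨c, hc⟩ := mem_nearConst.1 hv
  refine mem_filter.2 ⟨mem_univ _, c, ?_⟩
  have : (#{k | v k = c} : ℝ) + hammingDist v (fun _ ↦ c) = n := by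
    exact_mod_cast card_filter_eq_add_hammingDist v c
  simp only [mem_singleton]
  linarith

end NearConst

end ExceptionalVectors

section SparseVectors

lemma descFactorial_mul_pow_le {m N : ℕ} (h : m ≤ N) (k : ℕ) :
    m.descFactorial k * N ^ k ≤ N.descFactorial k * m ^ k := by
  induction k with
  | zero => simp
  | succ k ih =>
    have sub_mul_le : (m - k) * N ≤ (N - k) * m := by
      rw [Nat.sub_mul, Nat.sub_mul, Nat.mul_comm N m]
      exact Nat.sub_le_sub_left (Nat.mul_le_mul_left k h) _
    rw [Nat.descFactorial_succ, Nat.descFactorial_succ, pow_succ, pow_succ]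
    calc (m - k) * m.descFactorial k * (N ^ k * N)
        = (m.descFactorial k * N ^ k) * ((m - k) * N) := by ring
      _ ≤ (N.descFactorial k * m ^ k) * ((N - k) * m) := Nat.mul_le_mul ih sub_mul_le
      _ = _ := by ring

section Permutations

variable {X : Type*} [Fintype X] [DecidableEq X]

lemma card_perm_mem_iff_mem {W Y : Finset X} (h : #Y = #W) :
    #{P : Equiv.Perm X | ∀ x, P x ∈ W ↔ x ∈ Y} = (#W)! * (Fintype.card X - #W)! := by
  have letterCount_true (S : Finset X) : letterCount (fun x ↦ decide (x ∈ S)) true = #S := by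
    simp [letterCount]
  have letterCount_false (S : Finset X) :
      letterCount (fun x ↦ decide (x ∈ S)) false = Fintype.card X - #S := by
    simp [letterCount, ← card_compl, compl_eq_univ_sdiff, sdiff_eq_filter]
  have card_eq := card_perm_comp_eq (fun x ↦ decide (x ∈ W)) fun x ↦ decide (x ∈ Y)
  rw [if_pos, Fintype.prod_bool, letterCount_true, letterCount_false] at card_eq
  · simpa [funext_iff] using card_eq
  · ext (_ | _) <;> simp only [letterCount_true, letterCount_false, h]

lemma card_perm_mem_imp_mem_mul_pow_le (W Z : Finset X) :
    #{P : Equiv.Perm X | ∀ x, P x ∈ W → x ∈ Z} * Fintype.card X ^ #W ≤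
      (Fintype.card X)! * #Z ^ #W := by
  set N := Fintype.card X
  have subset_biUnion : ({P | ∀ x, P x ∈ W → x ∈ Z} : Finset (Equiv.Perm X)) ⊆
      (Z.powersetCard #W).biUnion fun Y ↦ {P | ∀ x, P x ∈ W ↔ x ∈ Y} := fun P hP ↦
    mem_biUnion.2 ⟨W.map P.symm.toEmbedding, mem_powersetCard.2 ⟨fun x hx ↦
      (mem_filter.1 hP).2 x (by simpa [mem_map_equiv] using hx), card_map _⟩,
      by simp [mem_map_equiv]⟩
  have card_le : #{P : Equiv.Perm X | ∀ x, P x ∈ W → x ∈ Z} ≤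
      (#Z).choose #W * ((#W)! * (N - #W)!) := by
    refine (card_le_card subset_biUnion).trans (card_biUnion_le.trans_eq ?_)
    rw [sum_congr rfl fun Y hY ↦ card_perm_mem_iff_mem (mem_powersetCard.1 hY).2, sum_const,
      card_powersetCard, smul_eq_mul]
  calc _ ≤ (#Z).choose #W * ((#W)! * (N - #W)!) * N ^ #W := Nat.mul_le_mul_right _ card_le
    _ = (#Z).descFactorial #W * N ^ #W * (N - #W)! := by
        rw [Nat.descFactorial_eq_factorial_mul_choose]; ring
    _ ≤ N.descFactorial #W * #Z ^ #W * (N - #W)! :=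
        Nat.mul_le_mul_right _ (descFactorial_mul_pow_le (card_le_univ Z) _)
    _ = (N - #W)! * N.descFactorial #W * #Z ^ #W := by ring
    _ = _ := by rw [Nat.factorial_mul_descFactorial (card_le_univ W)]

end Permutations

section Support

variable {α : Type*} [DecidableEq α] {n d : ℕ}

lemma card_filter_fst_ne (v : Fin n → α) (c : α) :
    #{y : Fin n × Fin d | v y.1 ≠ c} = d * hammingDist v fun _ ↦ c := by
  rw [← univ_product_univ, filter_product_left (fun k ↦ v k ≠ c), card_product, card_univ,
    Fintype.card_fin, mul_comm, hammingDist]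

lemma card_filter_apply_perm_ne (P : Equiv.Perm (Fin n × Fin d)) (v : Fin n → α) (c : α) :
    #{x | v (P x).1 ≠ c} = d * hammingDist v fun _ ↦ c := by
  rw [← card_filter_fst_ne v c]
  exact card_equiv P (by simp)

end Support

variable {R : Type*} [CommRing R] [DecidableEq R] {n d : ℕ} {v : Fin n → R}

lemma nullProb_eq_zero {c : R} (hc : d * c ≠ 0) (hv : d * hammingDist v (fun _ ↦ c) < n) :
    nullProb d v = 0 := by
  suffices nullPerms d v = ∅ by simp [nullProb, this]
  refine eq_empty_of_forall_notMem fun P hP ↦ ?_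
  have card_image_lt : #(image Prod.fst {x | v (P x).1 ≠ c}) < #(univ : Finset (Fin n)) := by
    refine card_image_le.trans_lt ?_
    rwa [card_filter_apply_perm_ne, card_univ, Fintype.card_fin]
  obtain ⟨k, -, hk⟩ := exists_mem_notMem_of_card_lt_card card_image_lt
  have row_const (i : Fin d) : v (P (k, i)).1 = c := by
    by_contra hne
    exact hk (mem_image.2 ⟨(k, i), by simpa using hne, rfl⟩)
  have row_sum := mem_nullPerms.1 hP k
  simp only [row_const, sum_const, card_univ, Fintype.card_fin, nsmul_eq_mul] at row_sum
  exact hc row_sum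

lemma two_mul_card_image_fst_le {P : Equiv.Perm (Fin n × Fin d)} (hP : P ∈ nullPerms d v) :
    2 * #(image Prod.fst {x | v (P x).1 ≠ 0}) ≤ d * hammingNorm v := by
  rw [← hammingDist_zero_right, Pi.zero_def, ← card_filter_apply_perm_ne P v 0]
  refine mul_card_image_le_card _ _ fun k hk ↦ ?_
  obtain ⟨⟨k, i⟩, hi, rfl⟩ := mem_image.1 hk
  obtain ⟨j, hji, hj⟩ : ∃ j ≠ i, v (P (k, j)).1 ≠ 0 := by
    by_contra! hzero
    have row_sum := mem_nullPerms.1 hP k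
    rw [Fintype.sum_eq_single i hzero] at row_sum
    exact (mem_filter.1 hi).2 row_sum
  exact one_lt_card.2 ⟨(k, i), by simpa using hi, (k, j), by simpa using hj,
    by simpa using hji.symm⟩

lemma card_perm_rows_subset_le [NeZero n] (hd : 0 < d) (v : Fin n → R) (S : Finset (Fin n)) :
    (#{P : Equiv.Perm (Fin n × Fin d) | ∀ x, v (P x).1 ≠ 0 → x.1 ∈ S} : ℝ) ≤
      (n * d)! * (#S / n : ℝ) ^ (d * hammingNorm v) := by
  have hn : (0 : ℝ) < n := Nat.cast_pos.2 (NeZero.pos n)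
  have hd' : (0 : ℝ) < d := Nat.cast_pos.2 hd
  have card_mul_le := card_perm_mem_imp_mem_mul_pow_le {y : Fin n × Fin d | v y.1 ≠ 0} (S ×ˢ univ)
  simp only [card_filter_fst_ne v 0, mem_filter_univ, mem_product, mem_univ, and_true,
    card_product, card_univ, Fintype.card_prod, Fintype.card_fin] at card_mul_le
  rw [← mul_div_mul_right _ _ hd'.ne', div_pow, ← mul_div_assoc, le_div_iff₀ (by positivity),
    ← hammingDist_zero_right]
  exact_mod_cast card_mul_le

lemma nullProb_le [NeZero n] (hd : 0 < d) (hv : d * hammingNorm v ≤ n) :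
    nullProb d v ≤ n.choose (d * hammingNorm v / 2) *
      ((d * hammingNorm v / 2 : ℕ) / n : ℝ) ^ (d * hammingNorm v) := by
  set m := d * hammingNorm v / 2
  have subset_biUnion : nullPerms d v ⊆ (univ.powersetCard m).biUnion fun S ↦
      {P | ∀ x, v (P x).1 ≠ 0 → x.1 ∈ S} := by
    intro P hP
    have card_rows_le : #(image Prod.fst {x | v (P x).1 ≠ 0}) ≤ m := by
      have := two_mul_card_image_fst_le hP
      omega
    obtain ⟨S, rows_subset, hS, hSm⟩ := exists_subsuperset_card_eq
      (subset_univ (image Prod.fst {x | v (P x).1 ≠ 0})) card_rows_le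
      (by rw [card_univ, Fintype.card_fin]; omega)
    exact mem_biUnion.2 ⟨S, mem_powersetCard.2 ⟨hS, hSm⟩, mem_filter.2 ⟨mem_univ _, fun x hx ↦
      rows_subset (mem_image_of_mem _ (by simpa using hx))⟩⟩
  rw [nullProb, div_le_iff₀ (by positivity)]
  calc (#(nullPerms d v) : ℝ)
      ≤ ∑ S ∈ (univ : Finset (Fin n)).powersetCard m,
          (#{P : Equiv.Perm (Fin n × Fin d) | ∀ x, v (P x).1 ≠ 0 → x.1 ∈ S} : ℝ) := by
        exact_mod_cast (card_le_card subset_biUnion).trans card_biUnion_le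
    _ ≤ ∑ _S ∈ (univ : Finset (Fin n)).powersetCard m,
          ((n * d)! * (m / n : ℝ) ^ (d * hammingNorm v)) :=
        sum_le_sum fun S hS ↦ (mem_powersetCard.1 hS).2 ▸ card_perm_rows_subset_le hd v S
    _ = _ := by
        rw [sum_const, card_powersetCard, card_univ, Fintype.card_fin, nsmul_eq_mul]
        ring

lemma card_filter_hammingNorm_eq_le [Fintype R] (n k : ℕ) :
    #{v : Fin n → R | hammingNorm v = k} ≤ n.choose k * Fintype.card R ^ k := by
  have subset_biUnion : ({v : Fin n → R | hammingNorm v = k} : Finset _) ⊆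
      (univ.powersetCard k).biUnion fun S ↦
        Fintype.piFinset fun i ↦ if i ∈ S then (univ : Finset R) else {0} := by
    refine fun v hv ↦ mem_biUnion.2 ⟨({i | v i ≠ 0} : Finset _), mem_powersetCard.2
      ⟨subset_univ _, (mem_filter.1 hv).2⟩, Fintype.mem_piFinset.2 fun i ↦ ?_⟩
    by_cases h : v i = 0 <;> simp [h]
  refine (card_le_card subset_biUnion).trans (card_biUnion_le.trans_eq ?_)
  rw [sum_congr rfl (g := fun _ ↦ Fintype.card R ^ k) fun S hS ↦ ?_]
  · simp
  · simp [Fintype.card_piFinset, apply_ite, (mem_powersetCard.1 hS).2]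

end SparseVectors

section SparseNullVectors

/-- A union bound for the expected number of null vectors of Hamming weight `k` over a ring with `q`
elements: there are at most `n.choose k * q ^ k` such vectors, and the support of each of them must
meet at most `d * k / 2` rows. -/
noncomputable def weightBound (n d q k : ℕ) : ℝ :=
  n.choose k * q ^ k * (n.choose (d * k / 2) * ((d * k / 2 : ℕ) / n : ℝ) ^ (d * k))

/-- The constant for which `weightBound n d q k ≤ (weightConst d * q * √(d * k / n)) ^ k`. -/
noncomputable def weightConst (d : ℕ) : ℝ := d * Real.exp (d + 1)

/-- The constant for which `weightConst d * q * √(d * k / n) ≤ 1 / 2` holds if and only if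
`k ≤ n / (radiusConst d * q ^ 2)`. -/
noncomputable def radiusConst (d : ℕ) : ℝ := 4 * weightConst d ^ 2 * d

/-- The Hamming weight up to which the null vectors over a ring with `q` elements are counted by a
union bound. -/
noncomputable def sparseRadius (n d q : ℕ) : ℝ := n / (radiusConst d * q ^ 2)

lemma sum_nullProb_hammingNorm_eq_le {R : Type*} [CommRing R] [Fintype R] [DecidableEq R]
    {n d k : ℕ} [NeZero n] (hd : 0 < d) (hk : d * k ≤ n) :
    ∑ v : Fin n → R with hammingNorm v = k, nullProb d v ≤ weightBound n d (Fintype.card R) k := by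
  have nullProb_le_of_mem (v : Fin n → R) (hv : v ∈ ({v | hammingNorm v = k} : Finset _)) :
      nullProb d v ≤ n.choose (d * k / 2) * ((d * k / 2 : ℕ) / n : ℝ) ^ (d * k) := by
    obtain rfl := (mem_filter.1 hv).2
    exact nullProb_le hd hk
  calc _ ≤ #{v : Fin n → R | hammingNorm v = k} *
        (n.choose (d * k / 2) * ((d * k / 2 : ℕ) / n : ℝ) ^ (d * k)) := by
        rw [← nsmul_eq_mul]
        exact sum_le_card_nsmul _ _ _ nullProb_le_of_mem
    _ ≤ weightBound n d (Fintype.card R) k := by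
        rw [weightBound]
        gcongr
        exact_mod_cast card_filter_hammingNorm_eq_le n k

lemma choose_mul_div_pow_le_exp {n : ℕ} (hn : 0 < n) (k : ℕ) :
    n.choose k * (k / n : ℝ) ^ k ≤ Real.exp k := by
  have : (0 : ℝ) < n := Nat.cast_pos.2 hn
  calc n.choose k * (k / n : ℝ) ^ k ≤ n ^ k / k ! * (k / n : ℝ) ^ k := by
        gcongr
        exact Nat.choose_le_pow_div k n
    _ = k ^ k / k ! := by
        rw [div_pow]
        field_simp
    _ ≤ Real.exp k := Real.pow_div_factorial_le_exp k k.cast_nonneg k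

lemma choose_half_mul_pow_le {n d k : ℕ} (hd : 3 ≤ d) (hn : 0 < n) (hk : d * k ≤ n) :
    n.choose (d * k / 2) * ((d * k / 2 : ℕ) / n : ℝ) ^ (d * k) ≤
      Real.exp (d * k) * √(d * k / n) ^ (3 * k) := by
  have hn' : (0 : ℝ) < n := Nat.cast_pos.2 hn
  set m := d * k / 2
  set r := √(d * k / n : ℝ)
  have m_le : m ≤ d * k := Nat.div_le_self _ _
  have r_le_one : r ≤ 1 := by
    rw [Real.sqrt_le_left zero_le_one, one_pow, div_le_one hn']
    exact_mod_cast hk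
  have div_le_sq : (m / n : ℝ) ≤ r ^ 2 := by
    rw [Real.sq_sqrt (by positivity)]
    gcongr
    exact_mod_cast m_le
  have three_mul_le : 3 * k ≤ d * k := Nat.mul_le_mul_right k hd
  calc n.choose m * (m / n : ℝ) ^ (d * k)
      = n.choose m * (m / n : ℝ) ^ m * (m / n : ℝ) ^ (d * k - m) := by
        rw [mul_assoc, ← pow_add, Nat.add_sub_cancel' m_le]
    _ ≤ Real.exp m * (r ^ 2) ^ (d * k - m) := by
        gcongr
        exact choose_mul_div_pow_le_exp hn m
    _ = Real.exp m * r ^ (2 * (d * k - m)) := by rw [pow_mul]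
    _ ≤ Real.exp (d * k) * r ^ (3 * k) := by
        gcongr ?_ * ?_
        · exact Real.exp_le_exp.2 (by exact_mod_cast m_le)
        · exact pow_le_pow_of_le_one (Real.sqrt_nonneg _) r_le_one (by omega)

lemma weightBound_le_pow {n d k : ℕ} (hd : 3 ≤ d) (hn : 0 < n) (q : ℕ) (hk : d * k ≤ n) :
    weightBound n d q k ≤ (weightConst d * q * √(d * k / n)) ^ k := by
  set r := √(d * k / n : ℝ)
  have r_pow : r ^ (3 * k) = r ^ k * (d ^ k * (k / n : ℝ) ^ k) := by
    rw [← mul_pow, ← mul_pow, pow_mul, pow_succ', Real.sq_sqrt (by positivity), mul_div_assoc]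
  calc weightBound n d q k
      ≤ n.choose k * q ^ k * (Real.exp (d * k) * r ^ (3 * k)) := by
        exact mul_le_mul_of_nonneg_left (choose_half_mul_pow_le hd hn hk) (by positivity)
    _ = n.choose k * (k / n : ℝ) ^ k * (q ^ k * Real.exp (d * k) * d ^ k * r ^ k) := by
        rw [r_pow]; ring
    _ ≤ Real.exp k * (q ^ k * Real.exp (d * k) * d ^ k * r ^ k) := by
        gcongr
        exact choose_mul_div_pow_le_exp hn k
    _ = (weightConst d * q * r) ^ k := by
        have exp_pow : Real.exp (d + 1) ^ k = Real.exp (d * k) * Real.exp k := by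
          rw [← Real.exp_nat_mul, ← Real.exp_add]
          ring_nf
        rw [weightConst, mul_pow, mul_pow, mul_pow, exp_pow]
        ring

section Constants

variable {n d q : ℕ}

lemma fifteen_le_weightConst (hd : 3 ≤ d) : 15 ≤ weightConst d := by
  have hd' : (3 : ℝ) ≤ d := by exact_mod_cast hd
  have := Real.add_one_le_exp (d + 1 : ℝ)
  unfold weightConst
  nlinarith

lemma mul_le_radiusConst (hd : 3 ≤ d) : 900 * d ≤ radiusConst d := by
  have : (3 : ℝ) ≤ d := by exact_mod_cast hd
  have : (225 : ℝ) ≤ weightConst d ^ 2 := by nlinarith [fifteen_le_weightConst hd]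
  unfold radiusConst
  nlinarith

lemma le_radiusConst (hd : 3 ≤ d) : 2700 ≤ radiusConst d := by
  have hd' : (3 : ℝ) ≤ d := by exact_mod_cast hd
  linarith [mul_le_radiusConst hd]

lemma mul_lt_of_le_sparseRadius (hd : 3 ≤ d) (hn : 0 < n) (hq : 0 < q) {k : ℕ}
    (hk : (k : ℝ) ≤ sparseRadius n d q) : d * k < n := by
  have hn' : (0 : ℝ) < n := Nat.cast_pos.2 hn
  have hq' : (1 : ℝ) ≤ q := Nat.one_le_cast.2 hq
  have C_le := mul_le_radiusConst hd
  have C_pos : 0 < radiusConst d := by linarith [le_radiusConst hd]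
  rw [sparseRadius, le_div_iff₀ (by positivity)] at hk
  have : (k : ℝ) * (900 * d) ≤ n := by
    calc (k : ℝ) * (900 * d) ≤ k * (radiusConst d * q ^ 2) :=
          mul_le_mul_of_nonneg_left
            (C_le.trans (le_mul_of_one_le_right C_pos.le (one_le_pow₀ hq'))) k.cast_nonneg
      _ ≤ n := hk
  have : (d : ℝ) * k < n := by nlinarith [mul_nonneg d.cast_nonneg k.cast_nonneg (α := ℝ)]
  exact_mod_cast this

lemma weightBound_succ_le (hd : 3 ≤ d) (hn : 0 < n) (hq : 0 < q) {k : ℕ}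
    (hk : ((k + 1 : ℕ) : ℝ) ≤ sparseRadius n d q) :
    weightBound n d q (k + 1) ≤ weightConst d * q * √(d / n) * ((k + 1) * (1 / 2) ^ k) := by
  have hn' : (0 : ℝ) < n := Nat.cast_pos.2 hn
  have hq' : (0 : ℝ) < q := Nat.cast_pos.2 hq
  have C_pos : 0 < weightConst d := by linarith [fifteen_le_weightConst hd]
  have C'_pos : 0 < radiusConst d := by linarith [le_radiusConst hd]
  set x := weightConst d * q * √(d * (k + 1 : ℕ) / n)
  have x_le_half : x ≤ 1 / 2 := by
    refine le_of_sq_le_sq ?_ (by norm_num)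
    rw [sparseRadius, le_div_iff₀ (by positivity), ← div_le_one hn'] at hk
    calc x ^ 2 = (k + 1 : ℕ) * (radiusConst d * q ^ 2) / n / 4 := by
          rw [mul_pow, Real.sq_sqrt (by positivity), radiusConst]
          ring
      _ ≤ 1 / 4 := by gcongr
      _ = (1 / 2) ^ 2 := by norm_num
  have x_le_mul : x ≤ weightConst d * q * √(d / n) * (k + 1) := by
    have sqrt_le : √(k + 1 : ℝ) ≤ k + 1 := by
      rw [Real.sqrt_le_left (by positivity)]
      exact le_self_pow₀ (by linarith [k.cast_nonneg (α := ℝ)]) two_ne_zero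
    calc x = weightConst d * q * √(d / n) * √(k + 1 : ℝ) := by
          rw [mul_assoc (_ * _), ← Real.sqrt_mul (by positivity), div_mul_eq_mul_div,
            ← Nat.cast_succ]
      _ ≤ _ := by gcongr
  calc weightBound n d q (k + 1) ≤ x ^ (k + 1) :=
        weightBound_le_pow hd hn q (mul_lt_of_le_sparseRadius hd hn hq hk).le
    _ ≤ (1 / 2) ^ k * (weightConst d * q * √(d / n) * (k + 1)) := by
        rw [pow_succ]
        gcongr
    _ = _ := by ring

end Constants

lemma sum_range_succ_mul_half_pow_le (K : ℕ) :
    ∑ k ∈ range K, ((k : ℝ) + 1) * (1 / 2) ^ k ≤ 4 := by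
  have closed_form : ∑ k ∈ range K, ((k : ℝ) + 1) * (1 / 2) ^ k =
      4 - 2 * (K + 2) * (1 / 2) ^ K := by
    induction K with
    | zero => norm_num
    | succ K ih =>
      rw [sum_range_succ, ih]
      push_cast
      ring
  have : (0 : ℝ) ≤ 2 * (K + 2) * (1 / 2) ^ K := by positivity
  linarith

lemma sum_nullProb_weight_le {R : Type*} [CommRing R] [Fintype R] [DecidableEq R] {n d : ℕ}
    [NeZero n] (hd : 3 ≤ d) :
    ∑ v : Fin n → R with v ≠ 0 ∧ (hammingNorm v : ℝ) ≤ sparseRadius n d (Fintype.card R),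
      nullProb d v ≤ 4 * (weightConst d * Fintype.card R * √(d / n)) := by
  set r := sparseRadius n d (Fintype.card R)
  have hn : 0 < n := NeZero.pos n
  have succ_le {k : ℕ} (hk : k ∈ range ⌊r⌋₊) : ((k + 1 : ℕ) : ℝ) ≤ r :=
    (Nat.le_floor_iff' k.succ_ne_zero).1 (mem_range.1 hk)
  have weight_mem (v : Fin n → R) (hv : v ∈ ({v | v ≠ 0 ∧ (hammingNorm v : ℝ) ≤ r} : Finset _)) :
      hammingNorm v - 1 ∈ range ⌊r⌋₊ := by
    obtain ⟨hv₀, hvr⟩ := (mem_filter.1 hv).2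
    have := Nat.le_floor hvr
    have := hammingNorm_pos_iff.2 hv₀
    exact mem_range.2 (by omega)
  rw [← sum_fiberwise_of_maps_to weight_mem]
  calc _ ≤ ∑ k ∈ range ⌊r⌋₊, ∑ v : Fin n → R with hammingNorm v = k + 1, nullProb d v := by
        refine sum_le_sum fun k _ ↦ sum_le_sum_of_subset_of_nonneg (fun v hv ↦ ?_)
          fun v _ _ ↦ nullProb_nonneg v
        simp only [mem_filter, mem_univ, true_and] at hv ⊢
        have := hammingNorm_pos_iff.2 hv.1.1
        omega
    _ ≤ ∑ k ∈ range ⌊r⌋₊, weightConst d * Fintype.card R * √(d / n) * ((k + 1) * (1 / 2) ^ k) :=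
        sum_le_sum fun k hk ↦ (sum_nullProb_hammingNorm_eq_le (by omega)
          (mul_lt_of_le_sparseRadius hd hn Fintype.card_pos (succ_le hk)).le).trans
            (weightBound_succ_le hd hn Fintype.card_pos (succ_le hk))
    _ ≤ weightConst d * Fintype.card R * √(d / n) * 4 := by
        rw [← mul_sum]
        have := fifteen_le_weightConst hd
        gcongr
        exact sum_range_succ_mul_half_pow_le _
    _ = _ := mul_comm _ _

lemma sum_nullProb_nearConst_le {n d p : ℕ} [Fact p.Prime] [NeZero n] (hd : 3 ≤ d)
    (hpd : p.Coprime d) :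
    ∑ v ∈ (nearConst n p (sparseRadius n d p)).erase 0, nullProb d v ≤
      4 * (weightConst d * p * √(d / n)) := by
  have d_ne_zero : (d : ZMod p) ≠ 0 := by
    rw [Ne, ZMod.natCast_eq_zero_iff]
    exact (Fact.out : p.Prime).coprime_iff_not_dvd.1 hpd
  have weight_le := sum_nullProb_weight_le (R := ZMod p) (n := n) hd
  rw [ZMod.card] at weight_le
  rw [← sum_filter_ne_zero]
  refine (sum_le_sum_of_subset_of_nonneg (fun v hv ↦ ?_) fun v _ _ ↦ nullProb_nonneg v).trans
    weight_le
  obtain ⟨hv, hv_prob⟩ := mem_filter.1 hv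
  obtain ⟨hv₀, c, hc⟩ := (mem_erase.1 hv).imp_right mem_nearConst.1
  obtain rfl : c = 0 := by
    by_contra hc₀
    exact hv_prob (nullProb_eq_zero (mul_ne_zero d_ne_zero hc₀)
      (mul_lt_of_le_sparseRadius hd (NeZero.pos n) (NeZero.pos p) hc))
  exact mem_filter.2 ⟨mem_univ _, hv₀, by simpa [← Pi.zero_def] using hc⟩

end SparseNullVectors

section CardinalityBounds

variable {n d p : ℕ} [Fact p.Prime]

lemma card_nearConst_sparseRadius_le (hd : 3 ≤ d) :
    (#(nearConst n p (sparseRadius n d p)) : ℝ) ≤ p * (6 / 5) ^ n := by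
  have hp : (2 : ℝ) ≤ p := by exact_mod_cast (Fact.out : p.Prime).two_le
  have hC := le_radiusConst hd
  have exp_le : Real.exp (1 / 300) ≤ 300 / 299 :=
    (Real.exp_bound_div_one_sub_of_interval (by norm_num) (by norm_num)).trans_eq (by norm_num)
  have log_le : Real.log (8 * p) ≤ 8 * p :=
    (Real.log_le_sub_one_of_pos (by positivity)).trans (by linarith)
  have rpow_le : (8 * p : ℝ) ^ sparseRadius n d p ≤ (300 / 299) ^ n := by
    rw [Real.rpow_def_of_pos (by positivity)]
    calc Real.exp (Real.log (8 * p) * sparseRadius n d p)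
        ≤ Real.exp (n * (1 / 300)) := by
          refine Real.exp_le_exp.2 ?_
          calc Real.log (8 * p) * (n / (radiusConst d * p ^ 2))
              ≤ 8 * p * (n / (radiusConst d * p ^ 2)) := by gcongr
            _ = n * (8 / (radiusConst d * p)) := by field_simp
            _ ≤ n * (1 / 300) := by
                refine mul_le_mul_of_nonneg_left ?_ n.cast_nonneg
                rw [div_le_div_iff₀ (by positivity) (by norm_num)]
                nlinarith
      _ = Real.exp (1 / 300) ^ n := Real.exp_nat_mul _ _
      _ ≤ (300 / 299) ^ n := by gcongr
  refine (card_nearConst_le n p _ (by linarith : (1 : ℝ) ≤ 8 * p)).trans ?_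
  refine mul_le_mul_of_nonneg_left ?_ p.cast_nonneg
  calc (1 + p / (8 * p) : ℝ) ^ n * (8 * p : ℝ) ^ sparseRadius n d p
      ≤ (9 / 8) ^ n * (300 / 299) ^ n := by
        gcongr
        exact le_of_eq (by field_simp; norm_num)
    _ = (9 / 8 * (300 / 299)) ^ n := (mul_pow _ _ _).symm
    _ ≤ (6 / 5) ^ n := pow_le_pow_left₀ (by norm_num) (by norm_num) n

lemma card_nearConst_div_log_le (hn : 1 < n) (hpn : p ≤ n) :
    (#(nearConst n p (n / Real.log n)) : ℝ) ≤ p * 6 ^ n := by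
  have hp : (2 : ℝ) ≤ p := by exact_mod_cast (Fact.out : p.Prime).two_le
  have hp₀ : (0 : ℝ) < p := by linarith
  have log_pos : 0 < Real.log n := Real.log_pos (by exact_mod_cast hn)
  have log_le : Real.log p ≤ Real.log n := Real.log_le_log hp₀ (by exact_mod_cast hpn)
  have rpow_le : (p : ℝ) ^ (n / Real.log n) ≤ 3 ^ n := by
    calc (p : ℝ) ^ (n / Real.log n) = Real.exp (Real.log p * (n / Real.log n)) :=
          Real.rpow_def_of_pos hp₀ _
      _ ≤ Real.exp (Real.log n * (n / Real.log n)) := by gcongr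
      _ = Real.exp 1 ^ n := by rw [mul_div_cancel₀ _ log_pos.ne', ← Real.exp_nat_mul, mul_one]
      _ ≤ 3 ^ n := pow_le_pow_left₀ (Real.exp_nonneg 1) Real.exp_one_lt_three.le n
  refine (card_nearConst_le n p _ (by linarith : (1 : ℝ) ≤ p)).trans ?_
  rw [div_self hp₀.ne']
  calc p * ((1 + 1) ^ n * (p : ℝ) ^ (n / Real.log n)) ≤ p * ((1 + 1) ^ n * 3 ^ n) := by gcongr
    _ = p * 6 ^ n := by rw [← mul_pow]; norm_num

open Classical in
/-- The vectors at least half of whose coordinates lie in one Bohr set of level `2500`. The level is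
a large enough square for a Chernoff bound to show that these are few, provided that Bohr sets have
density `O(1 / 2500)`; for `p < 2500` this fails, and no vector is put into the set. -/
noncomputable def concentrated (n p : ℕ) [NeZero p] : Finset (Fin n → ZMod p) :=
  {w | 2500 ≤ p ∧ ∃ t ≠ 0, ∃ b, (n / 2 : ℝ) ≤ #{k | w k ∈ bohrSet 2500 t b}}

lemma mem_concentrated {w : Fin n → ZMod p} :
    w ∈ concentrated n p ↔
      2500 ≤ p ∧ ∃ t ≠ 0, ∃ b, (n / 2 : ℝ) ≤ #{k | w k ∈ bohrSet 2500 t b} := by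
  simp [concentrated]

lemma card_filter_half_le_card_mem_bohrSet_le (hp : 2500 ≤ p) {t : ZMod p} (ht : t ≠ 0)
    (b : ZMod p) :
    (#{w : Fin n → ZMod p | (n / 2 : ℝ) ≤ #{k | w k ∈ bohrSet 2500 t b}} : ℝ) ≤
      (p * (2 / 25)) ^ n := by
  have chernoff := card_filter_le_card_mul_rpow_le (ι := Fin n) (bohrSet 2500 t b)
    (by norm_num : (1 : ℝ) ≤ 2500) (n / 2)
  have card_le := card_bohrSet_le (by norm_num) hp ht b
  have rpow_eq : (2500 : ℝ) ^ (n / 2 : ℝ) = 50 ^ n := by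
    rw [show (2500 : ℝ) = 50 ^ (2 : ℝ) by norm_num, ← Real.rpow_mul (by norm_num),
      mul_div_cancel₀ _ two_ne_zero, Real.rpow_natCast]
  rw [rpow_eq, ZMod.card, Fintype.card_fin, ← le_div_iff₀ (by positivity), ← div_pow] at chernoff
  refine chernoff.trans (pow_le_pow_left₀ (by positivity) ?_ n)
  push_cast at card_le
  linarith

lemma card_concentrated_le : (#(concentrated n p) : ℝ) ≤ p ^ 2 * (p * (2 / 25)) ^ n := by
  classical
  by_cases hp : 2500 ≤ p
  · have card_le (tb : {t : ZMod p // t ≠ 0} × ZMod p) :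
        (#{w : Fin n → ZMod p | (n / 2 : ℝ) ≤ #{k | w k ∈ bohrSet 2500 tb.1.1 tb.2}} : ℝ) ≤
          (p * (2 / 25)) ^ n := card_filter_half_le_card_mem_bohrSet_le hp tb.1.2 tb.2
    calc (#(concentrated n p) : ℝ) ≤ _ := by
          refine Nat.cast_le.2 (card_le_card fun w hw ↦ ?_)
          obtain ⟨-, t, ht, b, h⟩ := mem_concentrated.1 hw
          exact mem_filter.2 ⟨mem_univ _, (⟨t, ht⟩, b), h⟩
      _ ≤ _ := card_filter_exists_le _ card_le
      _ ≤ p ^ 2 * (p * (2 / 25)) ^ n := by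
          gcongr
          rw [Fintype.card_prod, ZMod.card, sq]
          exact_mod_cast Nat.mul_le_mul_right p
            ((Fintype.card_subtype_le _).trans_eq (ZMod.card p))
  · have : concentrated n p = ∅ := filter_eq_empty_iff.2 fun w _ h ↦ hp h.1
    rw [this, card_empty, Nat.cast_zero]
    positivity

end CardinalityBounds

section DecayRate

/-- The constant in `decayRate`. -/
noncomputable def decayConst (d : ℕ) : ℝ := 1 / (radiusConst d ^ 2 * 2500 ^ 4)

/-- The rate for which `charExp d v w` is of order at most `exp (-decayRate n d p)`, for all vectors
`v` and `w` over `ZMod p` far from constant vectors and outside `exceptionalPairs n p`. -/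
noncomputable def decayRate (n d p : ℕ) : ℝ := decayConst d * n / (p ^ 2 * Real.log n ^ 2)

variable {n d p : ℕ}

lemma decayConst_pos (hd : 3 ≤ d) : 0 < decayConst d := by
  have := le_radiusConst hd
  unfold decayConst
  positivity

lemma decayConst_le_one (hd : 3 ≤ d) : decayConst d ≤ 1 := by
  have := le_radiusConst hd
  rw [decayConst, div_le_one (by positivity)]
  nlinarith

lemma one_le_log (hn : 3 ≤ n) : 1 ≤ Real.log n := by
  rw [Real.le_log_iff_exp_le (Nat.cast_pos.2 (by omega))]
  exact Real.exp_one_lt_three.le.trans (by exact_mod_cast hn)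

lemma decayRate_le (hd : 3 ≤ d) (hn : 3 ≤ n) : decayRate n d p ≤ decayConst d * (n / p ^ 2) := by
  rw [decayRate, mul_div_assoc, ← div_div]
  exact mul_le_mul_of_nonneg_left (div_le_self (by positivity) (one_le_pow₀ (one_le_log hn)))
    (decayConst_pos hd).le

variable [Fact p.Prime] {v w : Fin n → ZMod p}

lemma div_le_dispersion_div (hn : 0 < n) {q : ℕ} {s u : ℝ} (hu : 0 ≤ u)
    (hv : v ∉ nearConst n p s) (hw : ∀ t ≠ 0, ∀ b, u ≤ #{k | w k ∉ bohrSet q t b}) :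
    2 * (s * u) / (q ^ 2 * n) ≤ dispersion ZMod.stdAddChar v w / (4 * n ^ 3) := by
  have : (0 : ℝ) < n := Nat.cast_pos.2 hn
  calc 2 * (s * u) / (q ^ 2 * n) = n * (s * (n * (u * (8 / q ^ 2)))) / (4 * n ^ 3) := by
        field_simp
        ring
    _ ≤ _ := by
        gcongr
        exact mul_le_dispersion_of_le_card_notMem_bohrSet q hu
          (le_hammingDist_of_notMem_nearConst hv) hw

lemma sq_div_le_dispersion_div (hn : 0 < n) {a : ℝ} (ha : 0 ≤ a) (hv : v ∉ nearConst n p a)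
    (hw : w ∉ nearConst n p a) :
    2 * (a * a) / (p ^ 2 * n) ≤ dispersion ZMod.stdAddChar v w / (4 * n ^ 3) := by
  refine div_le_dispersion_div hn ha hv fun t ht b ↦ ?_
  simpa only [hammingDist, bohrSet_self ht, mem_singleton] using
    le_hammingDist_of_notMem_nearConst hw b

lemma half_le_card_notMem_bohrSet (hp : 2500 ≤ p) (hw : w ∉ concentrated n p) {t : ZMod p}
    (ht : t ≠ 0) (b : ZMod p) : (n / 2 : ℝ) ≤ #{k | w k ∉ bohrSet 2500 t b} := by
  have card_add : (#{k | w k ∈ bohrSet 2500 t b} : ℝ) + #{k | w k ∉ bohrSet 2500 t b} = n := by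
    exact_mod_cast (card_filter_add_card_filter_not _).trans (card_fin n)
  have card_lt : (#{k | w k ∈ bohrSet 2500 t b} : ℝ) < n / 2 := by
    by_contra! h
    exact hw (mem_concentrated.2 ⟨hp, t, ht, b, h⟩)
  linarith

lemma decayRate_le_of_notMem_concentrated (hd : 3 ≤ d) (hn : 3 ≤ n) (hp : 2500 ≤ p)
    (hv : v ∉ nearConst n p (sparseRadius n d p)) (hw : w ∉ concentrated n p) :
    decayRate n d p ≤ dispersion ZMod.stdAddChar v w / (4 * n ^ 3) := by
  have hC := le_radiusConst hd
  have : (0 : ℝ) < p := Nat.cast_pos.2 (NeZero.pos p)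
  refine le_trans ?_ (div_le_dispersion_div (by omega) (by positivity) hv fun t ht b ↦
    half_le_card_notMem_bohrSet hp hw ht b)
  calc decayRate n d p ≤ decayConst d * (n / p ^ 2) := decayRate_le hd hn
    _ ≤ 1 / (radiusConst d * 2500 ^ 2) * (n / p ^ 2) := by
        unfold decayConst
        gcongr
        · nlinarith
        · norm_num
        · norm_num
    _ = 2 * (sparseRadius n d p * (n / 2)) / ((2500 : ℕ) ^ 2 * n) := by
        rw [sparseRadius]
        push_cast
        field_simp

lemma decayRate_le_of_notMem_nearConst_div_log (hd : 3 ≤ d) (hn : 3 ≤ n)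
    (hv : v ∉ nearConst n p (n / Real.log n)) (hw : w ∉ nearConst n p (n / Real.log n)) :
    decayRate n d p ≤ dispersion ZMod.stdAddChar v w / (4 * n ^ 3) := by
  have log_pos : 0 < Real.log n := one_pos.trans_le (one_le_log hn)
  have hp₀ : (0 : ℝ) < p := Nat.cast_pos.2 (NeZero.pos p)
  have : (0 : ℝ) < n := Nat.cast_pos.2 (by omega)
  refine le_trans ?_ (sq_div_le_dispersion_div (by omega) (by positivity) hv hw)
  calc decayRate n d p ≤ 2 * n / (p ^ 2 * Real.log n ^ 2) := by
        unfold decayRate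
        gcongr
        linarith [decayConst_le_one hd]
    _ = _ := by field_simp

lemma decayRate_le_of_lt (hd : 3 ≤ d) (hn : 3 ≤ n) (hp : p < 2500)
    (hv : v ∉ nearConst n p (sparseRadius n d p)) (hw : w ∉ nearConst n p (sparseRadius n d p)) :
    decayRate n d p ≤ dispersion ZMod.stdAddChar v w / (4 * n ^ 3) := by
  have hC := le_radiusConst hd
  have hp₀ : (0 : ℝ) < p := Nat.cast_pos.2 (NeZero.pos p)
  have hp' : (p : ℝ) ≤ 2500 := by exact_mod_cast hp.le
  have radius_nonneg : 0 ≤ sparseRadius n d p := by unfold sparseRadius; positivity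
  refine le_trans ?_ (sq_div_le_dispersion_div (by omega) radius_nonneg hv hw)
  calc decayRate n d p ≤ decayConst d * (n / p ^ 2) := decayRate_le hd hn
    _ ≤ 2 / (radiusConst d ^ 2 * p ^ 4) * (n / p ^ 2) := by
        unfold decayConst
        gcongr
        norm_num
    _ = _ := by
        rw [sparseRadius]
        field_simp

end DecayRate

section BulkVectors

/-- The pairs to which the lower bound on the dispersion does not apply: one vector is very close to
a constant one while the other one is concentrated on a Bohr set. -/
noncomputable def exceptionalPairs (n p : ℕ) [NeZero p] :
    Finset ((Fin n → ZMod p) × (Fin n → ZMod p)) :=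
  nearConst n p (n / Real.log n) ×ˢ concentrated n p ∪
    concentrated n p ×ˢ nearConst n p (n / Real.log n)

variable {n d p : ℕ} [Fact p.Prime]

lemma card_exceptionalPairs_le (hn : 1 < n) (hpn : p ≤ n) :
    (#(exceptionalPairs n p) : ℝ) ≤ 2 * p ^ 3 * (1 / 2) ^ n * p ^ n := by
  calc (#(exceptionalPairs n p) : ℝ)
      ≤ 2 * (#(nearConst n p (n / Real.log n)) * #(concentrated n p)) := by
        have := card_union_le (nearConst n p (n / Real.log n) ×ˢ concentrated n p)
          (concentrated n p ×ˢ nearConst n p (n / Real.log n))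
        rw [card_product, card_product, mul_comm #(concentrated n p), ← two_mul] at this
        exact_mod_cast this
    _ ≤ 2 * ((p * 6 ^ n) * (p ^ 2 * (p * (2 / 25)) ^ n)) := by
        gcongr
        · exact card_nearConst_div_log_le hn hpn
        · exact card_concentrated_le
    _ = 2 * p ^ 3 * (6 * (2 / 25)) ^ n * p ^ n := by
        rw [mul_pow, mul_pow]
        ring
    _ ≤ 2 * p ^ 3 * (1 / 2) ^ n * p ^ n := by
        gcongr
        norm_num

lemma decayRate_le_of_notMem_exceptionalPairs (hd : 3 ≤ d) (hn : 3 ≤ n) {v w : Fin n → ZMod p}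
    (hv : v ∉ nearConst n p (sparseRadius n d p)) (hw : w ∉ nearConst n p (sparseRadius n d p))
    (hvw : (v, w) ∉ exceptionalPairs n p) :
    decayRate n d p ≤ dispersion ZMod.stdAddChar v w / (4 * n ^ 3) := by
  simp only [exceptionalPairs, mem_union, mem_product, not_or, not_and] at hvw
  by_cases hp : p < 2500
  · exact decayRate_le_of_lt hd hn hp hv hw
  rw [not_lt] at hp
  by_cases hv' : v ∈ nearConst n p (n / Real.log n)
  · exact decayRate_le_of_notMem_concentrated hd hn hp hv (hvw.1 hv')
  by_cases hw' : w ∈ nearConst n p (n / Real.log n)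
  · rw [dispersion_comm]
    exact decayRate_le_of_notMem_concentrated hd hn hp hw fun h ↦ hvw.2 h hw'
  exact decayRate_le_of_notMem_nearConst_div_log hd hn hv' hw'

lemma sum_sum_le_mul_sum_sq_add_card {X : Type*} [Fintype X] {f : X → X → ℝ} {g : X → ℝ}
    {M : ℝ} (B : Finset X) (S : Finset (X × X)) (hM : 0 ≤ M) (hg : ∀ v, 0 ≤ g v)
    (hf : ∀ v w, f v w ≤ 1)
    (hfg : ∀ v ∈ B, ∀ w ∈ B, (v, w) ∉ S → f v w ≤ M * (g v * g w)) :
    ∑ v ∈ B, ∑ w ∈ B, f v w ≤ M * (∑ v, g v) ^ 2 + #S := by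
  classical
  have main_nonneg (x : X × X) : 0 ≤ M * (g x.1 * g x.2) :=
    mul_nonneg hM (mul_nonneg (hg _) (hg _))
  have error_nonneg (x : X × X) : (0 : ℝ) ≤ if x ∈ S then 1 else 0 := by positivity
  have le_main_add_error (x : X × X) (hx : x ∈ B ×ˢ B) :
      f x.1 x.2 ≤ M * (g x.1 * g x.2) + if x ∈ S then 1 else 0 := by
    obtain ⟨hx₁, hx₂⟩ := mem_product.1 hx
    split_ifs with hS
    · linarith [hf x.1 x.2, main_nonneg x]
    · linarith [hfg x.1 hx₁ x.2 hx₂ hS]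
  calc ∑ v ∈ B, ∑ w ∈ B, f v w = ∑ x ∈ B ×ˢ B, f x.1 x.2 := (sum_product' _ _ _).symm
    _ ≤ ∑ x ∈ B ×ˢ B, (M * (g x.1 * g x.2) + if x ∈ S then 1 else 0) :=
        sum_le_sum le_main_add_error
    _ ≤ ∑ x, (M * (g x.1 * g x.2) + if x ∈ S then 1 else 0) :=
        sum_le_sum_of_subset_of_nonneg (subset_univ _) fun x _ _ ↦
          add_nonneg (main_nonneg x) (error_nonneg x)
    _ = M * (∑ v, g v) ^ 2 + #S := by
        rw [sum_add_distrib, ← mul_sum, Fintype.sum_prod_type, sq, sum_mul_sum]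
        simp

lemma sum_sum_norm_charExp_le (hd : 3 ≤ d) (hn : 3 ≤ n) (hpn : p ≤ n) :
    (∑ v ∈ (nearConst n p (sparseRadius n d p))ᶜ, ∑ w ∈ (nearConst n p (sparseRadius n d p))ᶜ,
        ‖charExp ZMod.stdAddChar d v w‖) / p ^ n ≤
      (n * d + 1) ^ p * ((n + 1) ^ p) ^ 2 * Real.exp (-decayRate n d p) +
        2 * p ^ 3 * (1 / 2) ^ n := by
  have : NeZero n := ⟨by omega⟩
  have hp₀ : (0 : ℝ) < p := Nat.cast_pos.2 (NeZero.pos p)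
  have norm_charExp_le_rate (v w : Fin n → ZMod p)
      (h : decayRate n d p ≤ dispersion ZMod.stdAddChar v w / (4 * n ^ 3)) :
      ‖charExp ZMod.stdAddChar d v w‖ ≤
        (n * d + 1) ^ p * Real.exp (-decayRate n d p) * p ^ n * (empProb v * empProb w) := by
    have := (empProb_pos v).le
    have := (empProb_pos w).le
    refine (norm_charExp_le hd (ZMod.isPrimitive_stdAddChar p) v w).trans ?_
    rw [ZMod.card, mul_comm (_ * _ : ℝ) (_ ^ n), mul_assoc _ _ (p ^ n : ℝ), mul_assoc, mul_assoc]
    gcongr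
  have sum_le := sum_sum_le_mul_sum_sq_add_card (nearConst n p (sparseRadius n d p))ᶜ
    (exceptionalPairs n p) (by positivity) (fun v ↦ (empProb_pos v).le)
    (norm_charExp_le_one (d := d) ZMod.stdAddChar) fun v hv w hw hvw ↦ norm_charExp_le_rate v w
      (decayRate_le_of_notMem_exceptionalPairs hd hn (mem_compl.1 hv) (mem_compl.1 hw) hvw)
  have sum_empProb : ∑ v : Fin n → ZMod p, empProb v ≤ (n + 1) ^ p := by
    simpa only [Fintype.card_fin, ZMod.card] using sum_empProb_le (Fin n) (ZMod p)
  have sum_empProb_nonneg : 0 ≤ ∑ v : Fin n → ZMod p, empProb v :=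
    sum_nonneg fun v _ ↦ (empProb_pos v).le
  rw [div_le_iff₀ (by positivity)]
  calc _ ≤ _ := sum_le
    _ ≤ (n * d + 1) ^ p * Real.exp (-decayRate n d p) * p ^ n * ((n + 1) ^ p) ^ 2 +
          2 * p ^ 3 * (1 / 2) ^ n * p ^ n := by
        gcongr
        exact card_exceptionalPairs_le (by omega) hpn
    _ = _ := by ring

lemma abs_sum_nullProb_sub_one_le (hd : 3 ≤ d) (hn : 3 ≤ n) (hpn : p ≤ n) (hpd : p.Coprime d) :
    |∑ v : Fin n → ZMod p with v ≠ 0, nullProb d v - 1| ≤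
      8 * (weightConst d * p * √(d / n)) + p ^ 2 * (3 / 4) ^ n +
        ((n * d + 1) ^ p * ((n + 1) ^ p) ^ 2 * Real.exp (-decayRate n d p) +
          2 * p ^ 3 * (1 / 2) ^ n) := by
  have : NeZero n := ⟨by omega⟩
  have hp : (2 : ℝ) ≤ p := by exact_mod_cast (Fact.out : p.Prime).two_le
  have zero_mem : 0 ∈ nearConst n p (sparseRadius n d p) := by
    refine mem_nearConst.2 ⟨0, ?_⟩
    have := le_radiusConst hd
    rw [← Pi.zero_def, hammingDist_self, Nat.cast_zero, sparseRadius]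
    positivity
  have decomposition := abs_sum_nullProb_sub_one_le_add (d := d) (ZMod.isPrimitive_stdAddChar p)
    zero_mem
  rw [ZMod.card] at decomposition
  have sparse := sum_nullProb_nearConst_le (n := n) hd hpd
  have bulk := sum_sum_norm_charExp_le hd hn hpn
  have card_sq_le :
      (#(nearConst n p (sparseRadius n d p)) : ℝ) ^ 2 / p ^ n ≤ p ^ 2 * (3 / 4) ^ n := by
    rw [div_le_iff₀ (by positivity)]
    calc (#(nearConst n p (sparseRadius n d p)) : ℝ) ^ 2 ≤
          (p * (6 / 5) ^ n : ℝ) ^ 2 := by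
          gcongr
          exact card_nearConst_sparseRadius_le hd
      _ = (p : ℝ) ^ 2 * ((6 / 5) ^ 2) ^ n := by rw [mul_pow, pow_right_comm]
      _ ≤ (p : ℝ) ^ 2 * (3 / 4 * p) ^ n := by
          gcongr
          linarith
      _ = (p : ℝ) ^ 2 * (3 / 4) ^ n * p ^ n := by rw [mul_pow, mul_assoc]
  linarith

end BulkVectors

section Asymptotics

variable {n d p : ℕ}

lemma pow_three_le_of_mul_log_pow_three_le (hd : 3 ≤ d) (hn : 3 ≤ n)
    (h : 7 * (p * Real.log n) ^ 3 ≤ decayConst d * n) : (p : ℝ) ^ 3 ≤ n := by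
  have p_le : (p : ℝ) ≤ p * Real.log n := le_mul_of_one_le_right p.cast_nonneg (one_le_log hn)
  calc (p : ℝ) ^ 3 ≤ (p * Real.log n) ^ 3 := by gcongr
    _ ≤ 7 * (p * Real.log n) ^ 3 :=
        le_mul_of_one_le_left (pow_nonneg (p.cast_nonneg.trans p_le) 3) (by norm_num)
    _ ≤ decayConst d * n := h
    _ ≤ n := mul_le_of_le_one_left n.cast_nonneg (decayConst_le_one hd)

lemma mul_exp_neg_decayRate_le (hn : 3 ≤ n) (hdn : d + 1 ≤ n) (hp : 0 < p)
    (h : 7 * (p * Real.log n) ^ 3 ≤ decayConst d * n) :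
    (n * d + 1) ^ p * ((n + 1) ^ p) ^ 2 * Real.exp (-decayRate n d p) ≤ 1 / (n : ℝ) := by
  have hn' : (3 : ℝ) ≤ n := by exact_mod_cast hn
  have hdn' : (d + 1 : ℝ) ≤ n := by exact_mod_cast hdn
  have hp' : (1 : ℝ) ≤ p := by exact_mod_cast hp
  set l := Real.log n
  have l_pos : 0 < l := one_pos.trans_le (one_le_log hn)
  have exp_l : Real.exp l = n := Real.exp_log (by linarith)
  have le_decayRate : 7 * (p * l) ≤ decayRate n d p := by
    rw [decayRate, le_div_iff₀ (by positivity)]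
    linarith
  calc ((n * d + 1) ^ p * ((n + 1) ^ p) ^ 2 * Real.exp (-decayRate n d p) : ℝ)
      ≤ (n ^ 2) ^ p * ((n ^ 2) ^ p) ^ 2 * Real.exp (-(7 * (p * l))) := by
        gcongr <;> nlinarith
    _ = Real.exp (-(p * l)) := by
        rw [← exp_l]
        simp only [← Real.exp_nat_mul, ← Real.exp_add]
        congr 1
        push_cast
        ring
    _ ≤ Real.exp (-l) := Real.exp_le_exp.2 (neg_le_neg (le_mul_of_one_le_left l_pos.le hp'))
    _ = 1 / n := by rw [Real.exp_neg, exp_l, one_div]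

lemma mul_sqrt_div_le_of_pow_three_le (hn : 0 < n) (h : (p : ℝ) ^ 3 ≤ n) :
    p * √(d / n) ≤ √d * (n : ℝ) ^ (-(1 / 6) : ℝ) := by
  have hn' : (0 : ℝ) < n := Nat.cast_pos.2 hn
  have p_le : (p : ℝ) ≤ (n : ℝ) ^ (1 / 3 : ℝ) := by
    rw [one_div, Real.le_rpow_inv_iff_of_pos p.cast_nonneg n.cast_nonneg (by norm_num)]
    exact_mod_cast h
  calc p * √(d / n) = √d * (p * (n : ℝ) ^ (-(1 / 2) : ℝ)) := by
        rw [Real.sqrt_div d.cast_nonneg, Real.sqrt_eq_rpow n, Real.rpow_neg n.cast_nonneg]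
        ring
    _ ≤ √d * ((n : ℝ) ^ (1 / 3 : ℝ) * (n : ℝ) ^ (-(1 / 2) : ℝ)) := by gcongr
    _ = √d * (n : ℝ) ^ (-(1 / 6) : ℝ) := by
        rw [← Real.rpow_add hn']
        norm_num

lemma error_le (hd : 3 ≤ d) (hdn : d + 1 ≤ n) (hp : 0 < p)
    (h : 7 * (p * Real.log n) ^ 3 ≤ decayConst d * n) :
    8 * (weightConst d * p * √(d / n)) + p ^ 2 * (3 / 4) ^ n +
        ((n * d + 1) ^ p * ((n + 1) ^ p) ^ 2 * Real.exp (-decayRate n d p) +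
          2 * p ^ 3 * (1 / 2) ^ n) ≤
      8 * weightConst d * √d * (n : ℝ) ^ (-(1 / 6) : ℝ) + n * (3 / 4) ^ n +
        (1 / n + 2 * (n * (1 / 2) ^ n)) := by
  have hn : 3 ≤ n := by omega
  have hp' : (1 : ℝ) ≤ p := by exact_mod_cast hp
  have pow_three_le := pow_three_le_of_mul_log_pow_three_le hd hn h
  have pow_two_le : (p : ℝ) ^ 2 ≤ n := (pow_le_pow_right₀ hp' (by norm_num)).trans pow_three_le
  have weightConst_pos : 0 < weightConst d := by linarith [fifteen_le_weightConst hd]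
  have sparse : 8 * weightConst d * (p * √(d / n)) ≤
      8 * weightConst d * (√d * (n : ℝ) ^ (-(1 / 6) : ℝ)) :=
    mul_le_mul_of_nonneg_left (mul_sqrt_div_le_of_pow_three_le (by omega) pow_three_le)
      (by positivity)
  have nearly_constant : (p : ℝ) ^ 2 * (3 / 4) ^ n ≤ n * (3 / 4) ^ n := by gcongr
  have exceptional : (p : ℝ) ^ 3 * (1 / 2) ^ n ≤ n * (1 / 2) ^ n := by gcongr
  linarith [mul_exp_neg_decayRate_le hn hdn hp h]

open Filter Topology

lemma tendsto_error (W : ℝ) :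
    Tendsto (fun n : ℕ ↦ W * (n : ℝ) ^ (-(1 / 6) : ℝ) + n * (3 / 4) ^ n +
      (1 / n + 2 * (n * (1 / 2) ^ n))) atTop (𝓝 0) := by
  have rpow_term : Tendsto (fun n : ℕ ↦ (n : ℝ) ^ (-(1 / 6) : ℝ)) atTop (𝓝 0) :=
    (tendsto_rpow_neg_atTop (by norm_num)).comp tendsto_natCast_atTop_atTop
  have geometric_term {r : ℝ} (hr₀ : 0 ≤ r) (hr₁ : r < 1) :
      Tendsto (fun n : ℕ ↦ n * r ^ n) atTop (𝓝 0) :=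
    tendsto_self_mul_const_pow_of_lt_one hr₀ hr₁
  simpa using ((rpow_term.const_mul W).add (geometric_term (r := 3 / 4) (by norm_num)
    (by norm_num))).add (tendsto_one_div_atTop_nhds_zero_nat.add
      ((geometric_term (r := 1 / 2) (by norm_num) (by norm_num)).const_mul 2))

lemma eventually_abs_sum_nullProb_sub_one_le (hd : 3 ≤ d) {ε : ℝ} (hε : 0 < ε) :
    ∀ᶠ n : ℕ in atTop, ∀ (p : ℕ) [Fact p.Prime], p.Coprime d →
      7 * (p * Real.log n) ^ 3 ≤ decayConst d * n →
      |∑ v : Fin n → ZMod p with v ≠ 0, nullProb d v - 1| ≤ ε := by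
  filter_upwards [(tendsto_error (8 * weightConst d * √d)).eventually_le_const hε,
    eventually_ge_atTop (d + 1)] with n error_le_ε hdn p _ hpd h
  have pow_three_le : p ^ 3 ≤ n := by
    exact_mod_cast pow_three_le_of_mul_log_pow_three_le hd (by omega) h
  have p_le : p ≤ n := (Nat.le_self_pow three_ne_zero p).trans pow_three_le
  exact (abs_sum_nullProb_sub_one_le hd (by omega) p_le hpd).trans
    ((error_le hd hdn (NeZero.pos p) h).trans error_le_ε)

lemma seven_mul_pow_three_le (hd : 3 ≤ d) (hn : 3 ≤ n)
    (hp : (p : ℝ) ≤ decayConst d / 7 * (n : ℝ) ^ (1 / 3 : ℝ) / Real.log n) :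
    7 * (p * Real.log n) ^ 3 ≤ decayConst d * n := by
  have c_pos := decayConst_pos hd
  have log_pos : 0 < Real.log n := one_pos.trans_le (one_le_log hn)
  rw [le_div_iff₀ log_pos] at hp
  calc 7 * (p * Real.log n) ^ 3 ≤ 7 * (decayConst d / 7 * (n : ℝ) ^ (1 / 3 : ℝ)) ^ 3 := by gcongr
    _ = 7 * (decayConst d / 7) ^ 3 * n := by
        rw [mul_pow, ← Real.rpow_mul_natCast n.cast_nonneg]
        norm_num
        ring
    _ ≤ decayConst d * n := by
        gcongr
        nlinarith [decayConst_le_one hd, pow_le_one₀ (n := 2) c_pos.le (decayConst_le_one hd)]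

lemma eventually_rpow_le_mul_rpow_div_log {a b c : ℝ} (hab : a < b) (hc : 0 < c) :
    ∀ᶠ n : ℕ in atTop, (n : ℝ) ^ a ≤ c * (n : ℝ) ^ b / Real.log n := by
  have log_isLittleO := (isLittleO_log_rpow_atTop (sub_pos.2 hab)).comp_tendsto
    (tendsto_natCast_atTop_atTop (R := ℝ))
  filter_upwards [log_isLittleO.def hc, eventually_ge_atTop 3] with n log_le hn
  have hn' : (0 : ℝ) < n := Nat.cast_pos.2 (by omega)
  have log_pos : 0 < Real.log n := one_pos.trans_le (one_le_log hn)
  simp only [Function.comp_apply, Real.norm_of_nonneg log_pos.le,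
    Real.norm_of_nonneg (Real.rpow_nonneg hn'.le _)] at log_le
  rw [le_div_iff₀ log_pos]
  calc (n : ℝ) ^ a * Real.log n ≤ (n : ℝ) ^ a * (c * (n : ℝ) ^ (b - a)) := by gcongr
    _ = c * (n : ℝ) ^ b := by rw [mul_left_comm, ← Real.rpow_add hn', add_sub_cancel]

end Asymptotics

end DirectedConfiguration

theorem directed_count_null_vectors_general (d : ℕ) (hd : 3 ≤ d) :
    ∃ c : ℝ, 0 < c ∧ ∀ ε : ℝ, 0 < ε → ∀ᶠ n : ℕ in Filter.atTop,
      ∀ (p : ℕ) [Fact p.Prime], Nat.gcd p d = 1 →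
      (p : ℝ) ≤ c * (n : ℝ) ^ (1 / 3 : ℝ) / Real.log n →
      |(1 / ((n * d).factorial : ℝ)) *
          (∑ v ∈ Finset.univ.filter (fun v : Fin n → ZMod p => v ≠ 0),
            ((Finset.univ.filter (fun P : Equiv.Perm (Fin n × Fin d) =>
              Matrix.mulVec ((adjMat n d P).map (Int.cast : ℤ → ZMod p)) v = 0)).card : ℝ))
        - 1| ≤ ε := by
  refine ⟨DirectedConfiguration.decayConst d / 7,
    div_pos (DirectedConfiguration.decayConst_pos hd) (by norm_num), fun ε hε ↦ ?_⟩
  filter_upwards [DirectedConfiguration.eventually_abs_sum_nullProb_sub_one_le hd hε,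
    Filter.eventually_ge_atTop 3] with n abs_le hn p _ hpd hp
  rw [DirectedConfiguration.inv_factorial_mul_sum_card]
  exact abs_le p hpd (DirectedConfiguration.seven_mul_pow_three_le hd hn hp)

/-- For `d ≥ 3` and `α = min {1/4, (d-2)/(2d)}`, for every `ε > 0` there are `c > 0` and `N`
such that for all `n ≥ N` and all primes `p` with `gcd(p,d) = 1` and `p ≤ c n^α`,
`(1/(nd)!) Σ_{v ∈ 𝔽_p^n \ {0}} #{P : A(P) v = 0 over 𝔽_p}` is within `ε` of `1`. -/
theorem directed_count_null_vectors (d : ℕ) (hd : 3 ≤ d) (ε : ℝ) (hε : 0 < ε) :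
    ∃ c : ℝ, 0 < c ∧ ∃ N : ℕ, ∀ n : ℕ, N ≤ n →
      ∀ (p : ℕ) [Fact p.Prime], Nat.gcd p d = 1 →
      (p : ℝ) ≤ c * (n : ℝ) ^ (min (1/4 : ℝ) (((d : ℝ) - 2) / (2 * (d : ℝ)))) →
      |(1 / ((n * d).factorial : ℝ)) *
          (∑ v ∈ Finset.univ.filter (fun v : Fin n → ZMod p => v ≠ 0),
            ((Finset.univ.filter (fun P : Equiv.Perm (Fin n × Fin d) =>
              Matrix.mulVec ((adjMat n d P).map (Int.cast : ℤ → ZMod p)) v = 0)).card : ℝ))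
        - 1| ≤ ε := by
  obtain ⟨c, hc, h⟩ := directed_count_null_vectors_general d hd
  have exponent_lt : min (1 / 4 : ℝ) (((d : ℝ) - 2) / (2 * (d : ℝ))) < 1 / 3 :=
    min_lt_of_left_lt (by norm_num)
  obtain ⟨N, hN⟩ := Filter.eventually_atTop.1 ((h ε hε).and
    (DirectedConfiguration.eventually_rpow_le_mul_rpow_div_log exponent_lt hc))
  exact ⟨1, one_pos, N, fun n hn p _ hpd hp ↦
    (hN n hn).1 p hpd (hp.trans ((one_mul _).trans_le (hN n hn).2))⟩
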